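/- arXiv:1704.07717 — 6 statements merged into one kernel-verified Lean document; each statement's English description precedes it below -/
import Mathlib

section
/- Let μ = μ₁×⋯×μₙ be a product measure on ℝⁿ where each μᵢ is given by dμᵢ(x) = φᵢ(x)dx with φᵢ:ℝ→[0,∞) positively decreasing. Let λ∈(0,1) and let A,B⊆ℝⁿ be non-empty weakly unconditional Lebesgue measurable sets such that (1−λ)A+λB is also measurable. Then μ((1−λ)A+λB)^{1/n} ≥ (1−λ)μ(A)^{1/n} + λμ(B)^{1/n}. -/
open MeasureTheory Set Metric Filter
open scoped ENNReal NNReal Topology Pointwise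

noncomputable section

/-- The `d`-convex combination `(1-λ)A ⋆_d λB` of two sets. -/
def starComb {Z : Type*} (d : Z → Z → ℝ) (lam : ℝ) (A B : Set Z) : Set Z :=
  {z | ∃ a ∈ A, ∃ b ∈ B, d z a = lam * d a b ∧ d z b = (1 - lam) * d a b}

/-- A distance is strictly intrinsic: closed balls of radii summing to the distance
between their centers intersect. -/
def StrictlyIntrinsicDist {Z : Type*} (d : Z → Z → ℝ) : Prop :=
  ∀ x y : Z, ∀ r₁ r₂ : ℝ, 0 ≤ r₁ → 0 ≤ r₂ → r₁ + r₂ = d x y →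
    ∃ z : Z, d z x ≤ r₁ ∧ d z y ≤ r₂

/-- The ℓ² (Euclidean) product metric on `X × Y`. -/
def rho {X Y : Type*} [PseudoMetricSpace X] [PseudoMetricSpace Y] (a b : X × Y) : ℝ :=
  Real.sqrt (dist a.1 b.1 ^ 2 + dist a.2 b.2 ^ 2)

/-- The ℓ² (Euclidean) metric on a finite product of copies of a metric space. -/
def rhoPi {ι : Type*} [Fintype ι] {X : Type*} [PseudoMetricSpace X] (a b : ι → X) : ℝ :=
  Real.sqrt (∑ i, dist (a i) (b i) ^ 2)

open Classical in
/-- The `p`-th mean `M_p(a,b,λ)` of `a, b ∈ [0,∞]`, for `p ∈ ℝ ∪ {±∞}`, with the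
convention that it vanishes whenever `a * b = 0`. -/
def Mp (p : EReal) (lam : ℝ) (a b : ℝ≥0∞) : ℝ≥0∞ :=
  if a = 0 ∨ b = 0 then 0
  else if p = ⊤ then max a b
  else if p = ⊥ then min a b
  else if p = 0 then a ^ (1 - lam) * b ^ lam
  else (ENNReal.ofReal (1 - lam) * a ^ p.toReal + ENNReal.ofReal lam * b ^ p.toReal) ^ (1 / p.toReal)

open Classical in
/-- The `p`-th mean `M_p(a,b,λ)` of nonnegative reals, with the zero convention. -/
def MpR (p : EReal) (lam a b : ℝ) : ℝ :=
  if a = 0 ∨ b = 0 then 0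
  else if p = ⊤ then max a b
  else if p = ⊥ then min a b
  else if p = 0 then a ^ (1 - lam) * b ^ lam
  else ((1 - lam) * a ^ p.toReal + lam * b ^ p.toReal) ^ (1 / p.toReal)

/-- `(X,d,μ)` satisfies `BM(p)`. -/
def SatisfiesBM {X : Type*} [MeasurableSpace X] (d : X → X → ℝ) (μ : Measure X)
    (p : EReal) : Prop :=
  ∀ lam : ℝ, lam ∈ Ioo (0:ℝ) 1 → ∀ A B C : Set X, A.Nonempty → B.Nonempty →
    MeasurableSet A → MeasurableSet B → MeasurableSet C →
    μ A ≠ 0 → μ B ≠ 0 → starComb d lam A B ⊆ C →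
    Mp p lam (μ A) (μ B) ≤ μ C

/-- `(X,d,μ)` satisfies the general (linear) inequality `B̄M(1)`:
`μ(C) ≥ (1-λ)μ(A) + λμ(B)` for all nonempty measurable `A, B, C` with
`C ⊇ (1-λ)A ⋆ λB`. -/
def SatisfiesBMbarLinear {X : Type*} [MeasurableSpace X] (d : X → X → ℝ)
    (μ : Measure X) : Prop :=
  ∀ lam : ℝ, lam ∈ Ioo (0:ℝ) 1 → ∀ A B C : Set X, A.Nonempty → B.Nonempty →
    MeasurableSet A → MeasurableSet B → MeasurableSet C →
    starComb d lam A B ⊆ C →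
    ENNReal.ofReal (1 - lam) * μ A + ENNReal.ofReal lam * μ B ≤ μ C

/-- `(X,d,μ)` satisfies the general inequality `B̄M(p)` for a real `p > 0`:
`μ(C) ≥ ((1-λ)μ(A)^p + λμ(B)^p)^{1/p}` for all nonempty measurable `A, B, C`
with `C ⊇ (1-λ)A ⋆ λB`. -/
def SatisfiesBMbarPos {X : Type*} [MeasurableSpace X] (d : X → X → ℝ) (μ : Measure X)
    (p : ℝ) : Prop :=
  ∀ lam : ℝ, lam ∈ Ioo (0:ℝ) 1 → ∀ A B C : Set X, A.Nonempty → B.Nonempty →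
    MeasurableSet A → MeasurableSet B → MeasurableSet C →
    starComb d lam A B ⊆ C →
    (ENNReal.ofReal (1 - lam) * μ A ^ p + ENNReal.ofReal lam * μ B ^ p) ^ (1/p) ≤ μ C

/-- `(X,d,μ)` satisfies the weighted inequality `BM(p,q)`:
`μ(C)^p ≥ (1-λ)^q μ(A)^p + λ^q μ(B)^p` for all nonempty measurable sets of positive
measure with `C ⊇ (1-λ)A ⋆ λB`. -/
def SatisfiesBMW {X : Type*} [MeasurableSpace X] (d : X → X → ℝ) (μ : Measure X)
    (p q : ℝ) : Prop :=
  ∀ lam : ℝ, lam ∈ Ioo (0:ℝ) 1 → ∀ A B C : Set X, A.Nonempty → B.Nonempty →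
    MeasurableSet A → MeasurableSet B → MeasurableSet C →
    μ A ≠ 0 → μ B ≠ 0 → starComb d lam A B ⊆ C →
    ENNReal.ofReal ((1 - lam) ^ q) * μ A ^ p + ENNReal.ofReal (lam ^ q) * μ B ^ p ≤ μ C ^ p

/-- `(X,d,μ)` satisfies the Prékopa–Leindler inequality `PL`. -/
def SatisfiesPL {X : Type*} [MeasurableSpace X] (d : X → X → ℝ) (μ : Measure X) : Prop :=
  ∀ lam : ℝ, lam ∈ Ioo (0:ℝ) 1 → ∀ f g h : X → ℝ≥0∞,
    Measurable f → Measurable g → Measurable h →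
    (∀ x y z : X, d z x = lam * d x y → d z y = (1 - lam) * d x y →
      f x ^ (1 - lam) * g y ^ lam ≤ h z) →
    (∫⁻ x, f x ∂μ) ^ (1 - lam) * (∫⁻ x, g x ∂μ) ^ lam ≤ ∫⁻ x, h x ∂μ

open Classical in
/-- `(X,d,μ)` satisfies the Borell–Brascamp–Lieb inequality `BBL(p,m)`. -/
def SatisfiesBBL {X : Type*} [MeasurableSpace X] (d : X → X → ℝ) (μ : Measure X)
    (p m : ℝ) : Prop :=
  ∀ lam : ℝ, lam ∈ Ioo (0:ℝ) 1 → ∀ f g h : X → ℝ≥0∞,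
    Measurable f → Measurable g → Measurable h →
    (∀ x y z : X, d z x = lam * d x y → d z y = (1 - lam) * d x y →
      Mp (p : EReal) lam (f x) (g y) ≤ h z) →
    Mp (if m * p + 1 = 0 then (⊥ : EReal) else ((p / (m * p + 1) : ℝ) : EReal)) lam
      (∫⁻ x, f x ∂μ) (∫⁻ x, g x ∂μ) ≤ ∫⁻ x, h x ∂μ

/-- `φ : ℝ → ℝ` is positively decreasing: `t ↦ φ(t)` and `t ↦ φ(-t)` are
non-increasing on `[0,∞)`. -/
def PositivelyDecreasing (φ : ℝ → ℝ) : Prop :=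
  (∀ s t : ℝ, 0 ≤ s → s ≤ t → φ t ≤ φ s) ∧ (∀ s t : ℝ, 0 ≤ s → s ≤ t → φ (-t) ≤ φ (-s))

/-- A set `A ⊆ ℝⁿ` is weakly unconditional. -/
def WeaklyUnconditional {n : ℕ} (A : Set (Fin n → ℝ)) : Prop :=
  ∀ x ∈ A, ∀ ε : Fin n → ℝ, (∀ i, ε i = 0 ∨ ε i = 1) → (fun i => ε i * x i) ∈ A

/-- A nonnegative function on a real vector space is `p`-concave. -/
def PConcaveFn {E : Type*} [AddCommGroup E] [Module ℝ E] (p : EReal) (φ : E → ℝ) : Prop :=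
  ∀ x y : E, ∀ lam : ℝ, lam ∈ Ioo (0:ℝ) 1 →
    MpR p lam (φ x) (φ y) ≤ φ ((1 - lam) • x + lam • y)

/-- A function on a real vector space is radially decreasing. -/
def RadiallyDecreasing {E : Type*} [AddCommGroup E] [Module ℝ E] (φ : E → ℝ) : Prop :=
  ∀ x : E, ∀ t : ℝ, t ∈ Icc (0:ℝ) 1 → φ x ≤ φ (t • x)


lemma bm_compact (K L C : Set ℝ) (hK : IsCompact K) (hL : IsCompact L) (hKn : K.Nonempty)
    (hLn : L.Nonempty) (h : ∀ x ∈ K, ∀ y ∈ L, x + y ∈ C) :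
    volume K + volume L ≤ volume C := by
  obtain ⟨x0, hx0, hx⟩ := hK.exists_isGreatest hKn
  obtain ⟨y0, hy0, hy⟩ := hL.exists_isLeast hLn
  have h1 : volume ((fun x => y0 + x) '' K) = volume K := by simp
  have h2 : volume ((fun x => x0 + x) '' L) = volume L := by simp
  have m2 : MeasurableSet ((fun x => x0 + x) '' L) :=
    (hL.image (by fun_prop)).measurableSet
  rw [← h1, ← h2, ← measure_union₀ m2.nullMeasurableSet]
  · apply measure_mono
    rintro z (⟨x, hxk, rfl⟩ | ⟨y, hyl, rfl⟩)
    · simpa [add_comm] using h x hxk y0 hy0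
    · exact h x0 hx0 y hyl
  · apply measure_mono_null (t := {x0 + y0}) _ (by simp)
    rintro z ⟨⟨x, hxk, rfl⟩, ⟨y, hyl, hh⟩⟩
    have := hx hxk
    have := hy hyl
    simp only [mem_singleton_iff] at *
    linarith

lemma bm_one (A B C : Set ℝ) (hA : MeasurableSet A) (hB : MeasurableSet B) (hAn : A.Nonempty)
    (hBn : B.Nonempty) (h : ∀ x ∈ A, ∀ y ∈ B, x + y ∈ C) :
    volume A + volume B ≤ volume C := by
  rw [hA.measure_eq_iSup_isCompact, hB.measure_eq_iSup_isCompact]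
  simp only [iSup_and']
  refine ENNReal.biSup_add_biSup_le' ⟨∅, by simp⟩ ⟨∅, by simp⟩ ?_
  rintro K ⟨hKA, hK⟩ L ⟨hLB, hL⟩
  obtain ⟨a, ha⟩ := hAn
  obtain ⟨b, hb⟩ := hBn
  have e1 : volume K ≤ volume (insert a K) := measure_mono (subset_insert _ _)
  have e2 : volume L ≤ volume (insert b L) := measure_mono (subset_insert _ _)
  refine (add_le_add e1 e2).trans (bm_compact _ _ C (hK.insert a) (hL.insert b) (by simp) (by simp) ?_)
  intro x hx y hy
  exact h x (insert_subset ha hKA hx) y (insert_subset hb hLB hy)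

/-- the one dimensional property -/
def OneProp (lam : ℝ) (ν : Measure ℝ) : Prop :=
  ∀ A B C : Set ℝ, MeasurableSet A → MeasurableSet B → MeasurableSet C → 0 ∈ A → 0 ∈ B →
    (∀ x ∈ A, ∀ y ∈ B, (1 - lam) * x + lam * y ∈ C) →
    ENNReal.ofReal (1 - lam) * ν A + ENNReal.ofReal lam * ν B ≤ ν C

lemma oneProp_volume (lam : ℝ) (hlam : lam ∈ Ioo (0:ℝ) 1) : OneProp lam volume := by
  intro A B C hA hB hC hA0 hB0 h
  have h1 : (0:ℝ) < 1 - lam := by linarith [hlam.2]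
  have h2 := hlam.1
  have e1 := Measure.addHaar_smul (volume : Measure ℝ) (1 - lam) A
  have e2 := Measure.addHaar_smul (volume : Measure ℝ) lam B
  simp only [Module.finrank_self, pow_one, abs_of_pos h1, abs_of_pos h2] at e1 e2
  rw [← e1, ← e2]
  refine bm_one _ _ _ (hA.const_smul₀ _) (hB.const_smul₀ _) ⟨0, 0, hA0, by simp⟩ ⟨0, 0, hB0, by simp⟩ ?_
  rintro _ ⟨x, hx, rfl⟩ _ ⟨y, hy, rfl⟩
  exact h x hx y hy

lemma posdec_quasi {φ : ℝ → ℝ} (h : PositivelyDecreasing φ) {lam : ℝ} (hlam : lam ∈ Ioo (0:ℝ) 1)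
    {x y t : ℝ} (hx : t < φ x) (hy : t < φ y) : t < φ ((1 - lam) * x + lam * y) := by
  obtain ⟨h1, h2⟩ := hlam
  set z := (1 - lam) * x + lam * y with hz
  have key : (x ≤ z ∧ z ≤ y) ∨ (y ≤ z ∧ z ≤ x) := by
    rcases le_total x y with hxy | hxy
    · left; constructor <;> nlinarith
    · right; constructor <;> nlinarith
  rcases le_total 0 z with hz0 | hz0
  · rcases key with k | k
    · exact hy.trans_le (h.1 _ _ hz0 k.2)
    · exact hx.trans_le (h.1 _ _ hz0 k.2)
  · have := fun w hw => h.2 (-z) (-w) (by linarith) hw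
    simp only [neg_neg] at this
    rcases key with k | k
    · exact hx.trans_le (this _ (by linarith [k.1]))
    · exact hy.trans_le (this _ (by linarith [k.1]))

lemma posdec_zero {φ : ℝ → ℝ} (h : PositivelyDecreasing φ) (x : ℝ) : φ x ≤ φ 0 := by
  rcases le_total 0 x with h0 | h0
  · exact h.1 0 x le_rfl h0
  · simpa using h.2 0 (-x) le_rfl (by linarith)

lemma oneProp_density {φ : ℝ → ℝ} (h : PositivelyDecreasing φ) (h0 : ∀ x, 0 ≤ φ x)
    (hm : Measurable φ) {lam : ℝ} (hlam : lam ∈ Ioo (0:ℝ) 1) :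
    OneProp lam ((volume : Measure ℝ).withDensity fun x => ENNReal.ofReal (φ x)) := by
  intro A B C hA hB hC hA0 hB0 hh
  have key : ∀ S : Set ℝ, MeasurableSet S →
      ((volume : Measure ℝ).withDensity fun x => ENNReal.ofReal (φ x)) S
        = ∫⁻ t in Ioi (0:ℝ), volume ({x | t < φ x} ∩ S) := by
    intro S hS
    rw [withDensity_apply _ hS, lintegral_eq_lintegral_meas_lt _ (ae_of_all _ h0) hm.aemeasurable]
    refine lintegral_congr fun t => ?_
    rw [Measure.restrict_apply (measurableSet_lt measurable_const hm)]
  have mm : ∀ S : Set ℝ, Measurable fun t : ℝ => volume ({x | t < φ x} ∩ S) := fun S =>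
    Antitone.measurable fun s t hst => measure_mono (inter_subset_inter_left _
      fun x (hx : t < φ x) => lt_of_le_of_lt hst hx)
  rw [key A hA, key B hB, key C hC, ← lintegral_const_mul _ (mm A), ← lintegral_const_mul _ (mm B),
    ← lintegral_add_left ((mm A).const_mul _)]
  refine lintegral_mono fun t => ?_
  have mI : MeasurableSet {x | t < φ x} := measurableSet_lt measurable_const hm
  by_cases ht : t < φ 0
  · refine oneProp_volume lam hlam _ _ _ (mI.inter hA) (mI.inter hB) (mI.inter hC) ⟨ht, hA0⟩
      ⟨ht, hB0⟩ ?_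
    rintro x ⟨hx, hx'⟩ y ⟨hy, hy'⟩
    exact ⟨posdec_quasi h hlam hx hy, hh x hx' y hy'⟩
  · have : {x | t < φ x} = ∅ := by
      ext x; simp only [mem_ofPred_eq, mem_empty_iff_false, iff_false]
      intro hx; exact ht (hx.trans_le (posdec_zero h x))
    simp [this]

lemma oneProp_restrict {lam : ℝ} (hlam : lam ∈ Ioo (0:ℝ) 1) {ν : Measure ℝ} (h : OneProp lam ν)
    (R : ℝ) (hR : 0 ≤ R) : OneProp lam (ν.restrict (Icc (-R) R)) := by
  intro A B C hA hB hC hA0 hB0 hh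
  rw [Measure.restrict_apply hA, Measure.restrict_apply hB, Measure.restrict_apply hC]
  refine h _ _ _ (hA.inter measurableSet_Icc) (hB.inter measurableSet_Icc)
    (hC.inter measurableSet_Icc) ⟨hA0, by simpa⟩ ⟨hB0, by simpa⟩ ?_
  rintro x ⟨hx, hx'⟩ y ⟨hy, hy'⟩
  refine ⟨hh x hx y hy, ?_⟩
  exact (convex_Icc (-R) R) hx' hy' (by linarith [hlam.2]) hlam.1.le (by ring)

lemma holder_real {lam : ℝ} (hlam : lam ∈ Ioo (0:ℝ) 1) (n : ℕ) (a b x y : ℝ)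
    (ha : 0 ≤ a) (hb : 0 ≤ b) (hx : 0 ≤ x) (hy : 0 ≤ y) (hu : 0 < (1 - lam) * a + lam * b) :
    (1 - lam) * (a ^ n * x) ^ (1 / ((n:ℝ) + 1)) + lam * (b ^ n * y) ^ (1 / ((n:ℝ) + 1))
      ≤ (((1 - lam) * a + lam * b) ^ n * ((1 - lam) * x + lam * y)) ^ (1 / ((n:ℝ) + 1)) := by
  obtain ⟨l0, l1⟩ := hlam
  have l1' : 0 < 1 - lam := by linarith
  set u := (1 - lam) * a + lam * b with hu_def
  set v := (1 - lam) * x + lam * y with hv_def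
  have hv0 : 0 ≤ v := by positivity
  have hn : (0:ℝ) < (n:ℝ) + 1 := by positivity
  rcases hv0.eq_or_lt with hv | hv
  · have hx0 : x = 0 := by nlinarith [mul_nonneg l1'.le hx, mul_nonneg l0.le hy]
    have hy0 : y = 0 := by nlinarith [mul_nonneg l1'.le hx, mul_nonneg l0.le hy]
    rw [← hv, hx0, hy0]
    simp [Real.zero_rpow (inv_ne_zero hn.ne')]
  · have key : ∀ c w : ℝ, 0 ≤ c → 0 ≤ w → (c ^ n * w) ^ (1 / ((n:ℝ) + 1)) ≤
        (u ^ n * v) ^ (1 / ((n:ℝ) + 1)) * (n / ((n:ℝ)+1) * (c / u) + 1 / ((n:ℝ)+1) * (w / v)) := by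
      intro c w hc hw
      have := Real.geom_mean_le_arith_mean2_weighted (w₁ := n / ((n:ℝ)+1)) (w₂ := 1 / ((n:ℝ)+1))
        (p₁ := c / u) (p₂ := w / v) (by positivity) (by positivity) (by positivity) (by positivity)
        (by field_simp)
      refine le_trans (le_of_eq ?_) (mul_le_mul_of_nonneg_left this (by positivity))
      have e : (c / u) ^ (n / ((n:ℝ)+1)) = ((c / u) ^ n) ^ (1 / ((n:ℝ)+1)) := by
        rw [← Real.rpow_natCast, ← Real.rpow_mul (by positivity)]; congr 1; ring
      rw [e, ← Real.mul_rpow (by positivity) (by positivity),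
        ← Real.mul_rpow (by positivity) (by positivity)]
      congr 1
      rw [div_pow]
      field_simp
    have k1 := mul_le_mul_of_nonneg_left (key a x ha hx) l1'.le
    have k2 := mul_le_mul_of_nonneg_left (key b y hb hy) l0.le
    refine (add_le_add k1 k2).trans (le_of_eq ?_)
    have : (1 - lam) * (n / ((n:ℝ)+1) * (a / u) + 1 / ((n:ℝ)+1) * (x / v)) +
       lam * (n / ((n:ℝ)+1) * (b / u) + 1 / ((n:ℝ)+1) * (y / v)) = 1 := by
      have : (1 - lam) * (n / ((n:ℝ)+1) * (a / u) + 1 / ((n:ℝ)+1) * (x / v)) +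
       lam * (n / ((n:ℝ)+1) * (b / u) + 1 / ((n:ℝ)+1) * (y / v)) = 
        n / ((n:ℝ)+1) * (((1 - lam) * a + lam * b) / u) +
          1 / ((n:ℝ)+1) * (((1 - lam) * x + lam * y) / v) := by
        ring
      rw [this, ← hu_def, ← hv_def, div_self hu.ne', div_self hv.ne']; field_simp
    linear_combination (u ^ n * v) ^ (1 / ((n:ℝ) + 1)) * this

lemma layer {lam : ℝ} {ν : Measure ℝ} (hν : OneProp lam ν) (f g h : ℝ → ℝ) (m : ℝ) (hm : 0 < m)
    (hf : Measurable f) (hg : Measurable g) (hh : Measurable h)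
    (f0 : ∀ s, 0 ≤ f s) (g0 : ∀ s, 0 ≤ g s) (h0 : ∀ s, 0 ≤ h s)
    (f1 : ∀ s, f s ≤ f 0) (g1 : ∀ s, g s ≤ g 0)
    (H : ∀ τ : ℝ, 0 < τ → τ < 1 → ∀ s t, (s = 0 ∨ τ * f 0 < f s) → (t = 0 ∨ τ * g 0 < g t) →
      τ * m ≤ h ((1 - lam) * s + lam * t)) :
    ENNReal.ofReal (1 - lam) * ∫⁻ s, ENNReal.ofReal (f s / f 0) ∂ν +
      ENNReal.ofReal lam * ∫⁻ s, ENNReal.ofReal (g s / g 0) ∂ν ≤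
      ∫⁻ s, ENNReal.ofReal (h s / m) ∂ν := by
  rw [lintegral_eq_lintegral_meas_lt ν (ae_of_all _ fun s => div_nonneg (f0 s) (f0 0))
      (hf.div_const _).aemeasurable,
    lintegral_eq_lintegral_meas_lt ν (ae_of_all _ fun s => div_nonneg (g0 s) (g0 0))
      (hg.div_const _).aemeasurable,
    lintegral_eq_lintegral_meas_le ν (ae_of_all _ fun s => div_nonneg (h0 s) hm.le)
      (hh.div_const _).aemeasurable]
  have mm : ∀ k : ℝ → ℝ, Measurable fun t : ℝ => ν {x | t < k x} := fun S =>
    Antitone.measurable fun s t hst => measure_mono 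
      fun x (hx : t < S x) => lt_of_le_of_lt hst hx
  rw [← lintegral_const_mul _ (mm _), ← lintegral_const_mul _ (mm _),
    ← lintegral_add_left ((mm _).const_mul _)]
  refine setLIntegral_mono' measurableSet_Ioi fun τ (hτ : 0 < τ) => ?_
  have lt_iff : ∀ k : ℝ → ℝ, (∀ s, 0 ≤ k s) → (∀ s, k s ≤ k 0) → ∀ s, τ < k s / k 0 →
      τ < 1 ∧ τ * k 0 < k s := by
    intro k k0 k1 s hs
    have hk : 0 < k 0 := by
      rcases (k0 0).eq_or_lt with e | e
      · rw [← e, div_zero] at hs; linarith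
      · exact e
    rw [lt_div_iff₀ hk] at hs
    refine ⟨?_, hs⟩
    nlinarith [k1 s]
  by_cases hτ1 : τ < 1
  · have mf : MeasurableSet {a | τ < f a / f 0} := measurableSet_lt measurable_const (hf.div_const _)
    have mg : MeasurableSet {a | τ < g a / g 0} := measurableSet_lt measurable_const (hg.div_const _)
    have mh : MeasurableSet {a | τ ≤ h a / m} := measurableSet_le measurable_const (hh.div_const _)
    refine le_trans (add_le_add (mul_le_mul_right (measure_mono (subset_insert 0 _)) _)
      (mul_le_mul_right (measure_mono (subset_insert 0 _)) _))
      (hν (insert 0 {a | τ < f a / f 0}) (insert 0 {a | τ < g a / g 0}) {a | τ ≤ h a / m}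
        (mf.insert 0) (mg.insert 0) mh (mem_insert _ _) (mem_insert _ _) ?_)
    intro s hs t ht
    show τ ≤ _ / m
    rw [le_div_iff₀ hm]
    refine H τ hτ hτ1 s t (hs.imp_right fun h' => (lt_iff f f0 f1 s h').2)
      (ht.imp_right fun h' => (lt_iff g g0 g1 t h').2)
  · have e1 : {a | τ < f a / f 0} = ∅ :=
      eq_empty_of_forall_notMem fun s hs => hτ1 (lt_iff f f0 f1 s hs).1
    have e2 : {a | τ < g a / g 0} = ∅ :=
      eq_empty_of_forall_notMem fun s hs => hτ1 (lt_iff g g0 g1 s hs).1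
    simp [e1, e2]

/-- the n-dimensional property -/
def SumProp (lam : ℝ) (n : ℕ) (μ : Measure (Fin n → ℝ)) : Prop :=
  ∀ A B C : Set (Fin n → ℝ), MeasurableSet A → MeasurableSet B → MeasurableSet C →
    A.Nonempty → B.Nonempty → WeaklyUnconditional A → WeaklyUnconditional B →
    (∀ x ∈ A, ∀ y ∈ B, (1 - lam) • x + lam • y ∈ C) →
    (1 - lam) * μ.real A ^ (1 / (n:ℝ)) + lam * μ.real B ^ (1 / (n:ℝ)) ≤ μ.real C ^ (1 / (n:ℝ))

lemma real_eq {Y : Type*} [MeasurableSpace Y] (ν : Measure ℝ) [IsFiniteMeasure ν] (μ : Measure Y)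
    [IsFiniteMeasure μ] (S : Set (ℝ × Y)) (hS : MeasurableSet S) (α : ℝ) (hα : 0 ≤ α)
    (h : α = 0 → ∀ s, μ.real (Prod.mk s ⁻¹' S) ≤ 0) :
    ENNReal.ofReal α * ∫⁻ s, ENNReal.ofReal (μ.real (Prod.mk s ⁻¹' S) / α) ∂ν = (ν.prod μ) S := by
  rw [Measure.prod_apply hS, ← lintegral_const_mul]
  · refine lintegral_congr fun s => ?_
    rw [← ENNReal.ofReal_mul hα, ← ofReal_measureReal (μ := μ)]
    congr 1
    rcases hα.eq_or_lt with e | e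
    · rw [← e]; linarith [h e.symm s, measureReal_nonneg (μ := μ) (s := Prod.mk s ⁻¹' S)]
    · field_simp
  · exact ((measurable_measure_prodMk_left hS).ennreal_toReal.div_const _).ennreal_ofReal

lemma prod_step {lam : ℝ} (hlam : lam ∈ Ioo (0:ℝ) 1) {n : ℕ} (hn : 0 < n) (ν : Measure ℝ)
    [IsFiniteMeasure ν]
    (μ : Measure (Fin n → ℝ)) [IsFiniteMeasure μ] (hν : OneProp lam ν) (hμ : SumProp lam n μ)
    (A B C : Set (ℝ × (Fin n → ℝ))) (hA : MeasurableSet A) (hB : MeasurableSet B)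
    (hC : MeasurableSet C) (hA0 : ∀ p ∈ A, (0, p.2) ∈ A) (hB0 : ∀ p ∈ B, (0, p.2) ∈ B)
    (hAn : A.Nonempty) (hBn : B.Nonempty)
    (hAw : ∀ s, WeaklyUnconditional (Prod.mk s ⁻¹' A))
    (hBw : ∀ s, WeaklyUnconditional (Prod.mk s ⁻¹' B))
    (hc : ∀ x ∈ A, ∀ y ∈ B, (1 - lam) • x + lam • y ∈ C) :
    (1 - lam) * (ν.prod μ).real A ^ (1 / ((n:ℝ) + 1)) +
      lam * (ν.prod μ).real B ^ (1 / ((n:ℝ) + 1)) ≤ (ν.prod μ).real C ^ (1 / ((n:ℝ)+1)) := by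
  have l1' : 0 < 1 - lam := by linarith [hlam.2]
  have l0 := hlam.1
  have hnR : (0:ℝ) < n := by exact_mod_cast hn
  set f : ℝ → ℝ := fun s => μ.real (Prod.mk s ⁻¹' A) with hf_def
  set g : ℝ → ℝ := fun s => μ.real (Prod.mk s ⁻¹' B) with hg_def
  set h : ℝ → ℝ := fun s => μ.real (Prod.mk s ⁻¹' C) with hh_def
  have hf : Measurable f := (measurable_measure_prodMk_left hA).ennreal_toReal
  have hg : Measurable g := (measurable_measure_prodMk_left hB).ennreal_toReal
  have hh : Measurable h := (measurable_measure_prodMk_left hC).ennreal_toReal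
  have f0 : ∀ s, 0 ≤ f s := fun s => measureReal_nonneg
  have g0 : ∀ s, 0 ≤ g s := fun s => measureReal_nonneg
  have h0 : ∀ s, 0 ≤ h s := fun s => measureReal_nonneg
  have f1 : ∀ s, f s ≤ f 0 := fun s => measureReal_mono fun y hy => hA0 _ hy
  have g1 : ∀ s, g s ≤ g 0 := fun s => measureReal_mono fun y hy => hB0 _ hy
  have EA := real_eq ν μ A hA (f 0) (f0 0) (fun e s => e ▸ f1 s)
  have EB := real_eq ν μ B hB (g 0) (g0 0) (fun e s => e ▸ g1 s)
  obtain ⟨a, ha, haf⟩ : ∃ a : ℝ, 0 ≤ a ∧ a = f 0 ^ (1 / (n:ℝ)) := ⟨_, by positivity [f0 0], rfl⟩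
  obtain ⟨b, hb, hbg⟩ : ∃ b : ℝ, 0 ≤ b ∧ b = g 0 ^ (1 / (n:ℝ)) := ⟨_, by positivity [g0 0], rfl⟩
  have pw : ∀ c d : ℝ, 0 ≤ d → c = d ^ (1 / (n:ℝ)) → c ^ n = d := by
    intro c d hd e
    rw [e, one_div, Real.rpow_inv_natCast_pow hd hn.ne']
  have han := pw a _ (f0 0) haf
  have hbn := pw b _ (g0 0) hbg
  have RA := congrArg ENNReal.toReal EA
  have RB := congrArg ENNReal.toReal EB
  rw [ENNReal.toReal_mul, ENNReal.toReal_ofReal (f0 0)] at RA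
  rw [ENNReal.toReal_mul, ENNReal.toReal_ofReal (g0 0)] at RB
  change _ = (ν.prod μ).real A at RA
  change _ = (ν.prod μ).real B at RB
  have hM0 : 0 ≤ (1 - lam) * a + lam * b := by positivity
  rcases hM0.eq_or_lt with hM | hM
  · have ha0 : a = 0 := by nlinarith [mul_nonneg l1'.le ha, mul_nonneg l0.le hb]
    have hb0 : b = 0 := by nlinarith [mul_nonneg l1'.le ha, mul_nonneg l0.le hb]
    have fz : f 0 = 0 := by rw [← han, ha0, zero_pow hn.ne']
    have gz : g 0 = 0 := by rw [← hbn, hb0, zero_pow hn.ne']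
    rw [← RA, ← RB, fz, gz]
    simp only [zero_mul]
    rw [Real.zero_rpow (by positivity)]
    simp only [mul_zero, add_zero]
    positivity
  set m := ((1 - lam) * a + lam * b) ^ n with hm_def
  have hm : 0 < m := by positivity
  have EC := real_eq ν μ C hC m hm.le (fun e => absurd e hm.ne')
  have RC := congrArg ENNReal.toReal EC
  rw [ENNReal.toReal_mul, ENNReal.toReal_ofReal hm.le] at RC
  change _ = (ν.prod μ).real C at RC
  have key := layer hν f g h m hm hf hg hh f0 g0 h0 f1 g1 (by
    intro τ hτ hτ1 s t hs ht
    have hs1 : τ * f 0 ≤ f s := by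
      rcases hs with rfl | hs
      · nlinarith [f0 0]
      · exact hs.le
    have ht1 : τ * g 0 ≤ g t := by
      rcases ht with rfl | ht
      · nlinarith [g0 0]
      · exact ht.le
    have hsn : (Prod.mk s ⁻¹' A).Nonempty := by
      rcases hs with rfl | hs
      · obtain ⟨p, hp⟩ := hAn
        exact ⟨p.2, hA0 p hp⟩
      · by_contra hne
        rw [not_nonempty_iff_eq_empty] at hne
        have : f s = 0 := by simp [hf_def, hne]
        nlinarith [mul_nonneg hτ.le (f0 0)]
    have htn : (Prod.mk t ⁻¹' B).Nonempty := by
      rcases ht with rfl | ht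
      · obtain ⟨p, hp⟩ := hBn
        exact ⟨p.2, hB0 p hp⟩
      · by_contra hne
        rw [not_nonempty_iff_eq_empty] at hne
        have : g t = 0 := by simp [hg_def, hne]
        nlinarith [mul_nonneg hτ.le (g0 0)]
    have := hμ (Prod.mk s ⁻¹' A) (Prod.mk t ⁻¹' B) (Prod.mk ((1 - lam) * s + lam * t) ⁻¹' C)
      (measurable_prodMk_left hA) (measurable_prodMk_left hB) (measurable_prodMk_left hC)
      hsn htn (hAw s) (hBw t) (fun x hx y hy => hc (s, x) hx (t, y) hy)
    change (1 - lam) * f s ^ (1 / (n:ℝ)) + lam * g t ^ (1 / (n:ℝ)) ≤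
      h ((1 - lam) * s + lam * t) ^ (1 / (n:ℝ)) at this
    have q1 : τ ^ (1 / (n:ℝ)) * a ≤ f s ^ (1 / (n:ℝ)) := by
      rw [haf, ← Real.mul_rpow hτ.le (f0 0)]
      exact Real.rpow_le_rpow (mul_nonneg hτ.le (f0 0)) hs1 (by positivity)
    have q2 : τ ^ (1 / (n:ℝ)) * b ≤ g t ^ (1 / (n:ℝ)) := by
      rw [hbg, ← Real.mul_rpow hτ.le (g0 0)]
      exact Real.rpow_le_rpow (mul_nonneg hτ.le (g0 0)) ht1 (by positivity)
    have q3 : τ ^ (1 / (n:ℝ)) * ((1 - lam) * a + lam * b) ≤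
        h ((1 - lam) * s + lam * t) ^ (1 / (n:ℝ)) := by
      nlinarith [mul_le_mul_of_nonneg_left q1 l1'.le, mul_le_mul_of_nonneg_left q2 l0.le]
    have q4 := pow_le_pow_left₀ (by positivity) q3 n
    rwa [mul_pow, pw _ τ hτ.le rfl, pw _ _ (h0 _) rfl] at q4)
  set X := ∫⁻ s, ENNReal.ofReal (f s / f 0) ∂ν with hX
  set Y := ∫⁻ s, ENNReal.ofReal (g s / g 0) ∂ν with hY
  set Z := ∫⁻ s, ENNReal.ofReal (h s / m) ∂ν with hZ
  have Zfin : Z ≠ ∞ := by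
    intro hz
    change ENNReal.ofReal m * Z = _ at EC
    rw [hz, ENNReal.mul_top (by simpa using hm)] at EC
    exact measure_ne_top _ _ EC.symm
  have fin : ENNReal.ofReal (1 - lam) * X + ENNReal.ofReal lam * Y ≠ ∞ :=
    ne_top_of_le_ne_top Zfin key
  rw [ENNReal.add_ne_top] at fin
  have key2 := ENNReal.toReal_mono Zfin key
  rw [ENNReal.toReal_add fin.1 fin.2, ENNReal.toReal_mul, ENNReal.toReal_mul,
    ENNReal.toReal_ofReal l1'.le, ENNReal.toReal_ofReal l0.le] at key2
  rw [← RA, ← RB, ← RC]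
  rw [← han, ← hbn]
  refine (holder_real hlam n a b X.toReal Y.toReal ha hb (by simp) (by simp) hM).trans ?_
  refine Real.rpow_le_rpow (by positivity) ?_ (by positivity)
  exact mul_le_mul_of_nonneg_left key2 hm.le

lemma sumProp_one {lam : ℝ} (hlam : lam ∈ Ioo (0:ℝ) 1) (ν : Fin 1 → Measure ℝ)
    [∀ i, IsFiniteMeasure (ν i)] (hν : ∀ i, OneProp lam (ν i)) :
    SumProp lam 1 (Measure.pi ν) := by
  intro A B C hA hB hC hAn hBn hAw hBw hc
  have l1' : 0 < 1 - lam := by linarith [hlam.2]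
  have l0 := hlam.1
  have hνe : ν = fun _ => ν 0 := by funext i; rw [Subsingleton.elim i 0]
  have mc : Measurable fun (t : ℝ) (_ : Fin 1) => t := by fun_prop
  have E : ∀ S : Set (Fin 1 → ℝ), (Measure.pi ν).real S = (ν 0).real ((fun t _ => t) ⁻¹' S) := by
    intro S
    have := (measurePreserving_funUnique (ν 0) (Fin 1)).symm.measure_preimage_equiv S
    rw [← hνe] at this
    unfold Measure.real
    refine congrArg ENNReal.toReal ?_
    convert! this.symm
  have z : ∀ S : Set (Fin 1 → ℝ), S.Nonempty → WeaklyUnconditional S →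
      (0:ℝ) ∈ (fun (t : ℝ) (_ : Fin 1) => t) ⁻¹' S := by
    rintro S ⟨x, hx⟩ hS
    simpa using hS x hx (fun _ => 0) (by simp)
  have := hν 0 _ _ _ (mc hA) (mc hB) (mc hC) (z A hAn hAw) (z B hBn hBw)
    (fun x hx y hy => hc _ hx _ hy)
  have t := ENNReal.toReal_mono (measure_ne_top _ _) this
  rw [ENNReal.toReal_add (by finiteness) (by finiteness), ENNReal.toReal_mul, ENNReal.toReal_mul,
    ENNReal.toReal_ofReal l1'.le, ENNReal.toReal_ofReal l0.le] at t
  rw [E, E, E]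
  simpa [Measure.real] using t

lemma sumProp_succ {lam : ℝ} (hlam : lam ∈ Ioo (0:ℝ) 1) {n : ℕ} (hn : 0 < n)
    (ν : Fin (n + 1) → Measure ℝ)
    [∀ i, IsFiniteMeasure (ν i)] (hν : ∀ i, OneProp lam (ν i))
    (ih : SumProp lam n (Measure.pi fun j => ν (Fin.succ j))) :
    SumProp lam (n + 1) (Measure.pi ν) := by
  intro A B C hA hB hC hAn hBn hAw hBw hc
  set e := (MeasurableEquiv.piFinSuccAbove (fun _ : Fin (n + 1) => ℝ) 0).symm with he
  have hes : ∀ p : ℝ × (Fin n → ℝ), e p = Fin.cons p.1 p.2 := by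
    intro p
    simp [he, MeasurableEquiv.piFinSuccAbove_symm_apply]
    rfl
  have mp := (measurePreserving_piFinSuccAbove ν 0).symm
  simp only [Fin.succAbove_zero] at mp
  have E : ∀ S : Set (Fin (n + 1) → ℝ), (Measure.pi ν).real S =
      ((ν 0).prod (Measure.pi fun j => ν (Fin.succ j))).real (e ⁻¹' S) := by
    intro S
    unfold Measure.real
    rw [mp.measure_preimage_equiv S]
  have z : ∀ S : Set (Fin (n + 1) → ℝ), WeaklyUnconditional S → ∀ p ∈ e ⁻¹' S,
      (0, p.2) ∈ e ⁻¹' S := by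
    intro S hS p hp
    have hp' : e p ∈ S := hp
    rw [hes] at hp'
    show e _ ∈ S
    rw [hes]
    convert hS _ hp' (Fin.cons 0 fun _ => 1) ?_ using 1
    · funext i; refine Fin.cases ?_ (fun j => ?_) i <;> simp
    · intro i; refine Fin.cases ?_ (fun j => ?_) i <;> simp
  have w : ∀ S : Set (Fin (n + 1) → ℝ), WeaklyUnconditional S → ∀ s,
      WeaklyUnconditional (Prod.mk s ⁻¹' (e ⁻¹' S)) := by
    intro S hS s x hx ε hε
    have hp' : e (s, x) ∈ S := hx
    rw [hes] at hp'
    show e _ ∈ S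
    rw [hes]
    convert hS _ hp' (Fin.cons 1 ε) ?_ using 1
    · funext i; refine Fin.cases ?_ (fun j => ?_) i <;> simp
    · intro i; refine Fin.cases ?_ (fun j => ?_) i
      · simp
      · simpa using hε j
  rw [E, E, E]
  push_cast
  refine prod_step hlam hn (ν 0) _ (hν 0) ih _ _ _ (e.measurable hA) (e.measurable hB)
    (e.measurable hC) (z A hAw) (z B hBw) (hAn.preimage e.surjective)
    (hBn.preimage e.surjective) (w A hAw) (w B hBw) ?_
  intro x hx y hy
  have := hc _ hx _ hy
  show e _ ∈ C
  convert this using 1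
  rw [hes, hes, hes]
  funext i; refine Fin.cases ?_ (fun j => ?_) i <;> simp

lemma sumProp_all {lam : ℝ} (hlam : lam ∈ Ioo (0:ℝ) 1) {n : ℕ} (hn : 0 < n) :
    ∀ (ν : Fin n → Measure ℝ) [∀ i, IsFiniteMeasure (ν i)] (_ : ∀ i, OneProp lam (ν i)),
    SumProp lam n (Measure.pi ν) := by
  induction n, hn using Nat.le_induction with
  | base => intro ν _ hν; exact sumProp_one hlam ν hν
  | succ n hn ih => 
    intro ν _ hν
    exact sumProp_succ hlam hn ν hν (ih _ fun i => hν _)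

lemma density_restrict_finite {φ : ℝ → ℝ} (h : PositivelyDecreasing φ) (R : ℝ) :
    IsFiniteMeasure (((volume : Measure ℝ).withDensity fun x => ENNReal.ofReal (φ x)).restrict
      (Icc (-R) R)) := by
  constructor
  rw [Measure.restrict_apply_univ, withDensity_apply _ measurableSet_Icc]
  calc _ ≤ ∫⁻ x in Icc (-R) R, ENNReal.ofReal (φ 0) :=
        lintegral_mono fun x => ENNReal.ofReal_le_ofReal (posdec_zero h x)
    _ < ∞ := by
      rw [setLIntegral_const]
      exact ENNReal.mul_lt_top (by simp) (by simp)

/-- Theorem A / `t:BM_prod_quasi-conc`: the Brunn–Minkowski inequality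
for weakly unconditional sets with respect to a product of measures on `ℝⁿ` with
positively decreasing densities. -/
theorem statement0 {n : ℕ} (hn : 0 < n) (φ : Fin n → ℝ → ℝ)
    (hφ0 : ∀ i x, 0 ≤ φ i x) (hφmeas : ∀ i, Measurable (φ i))
    (hφdec : ∀ i, PositivelyDecreasing (φ i))
    (μ : Measure (Fin n → ℝ))
    (hμ : μ = Measure.pi fun i => (volume : Measure ℝ).withDensity
      fun x => ENNReal.ofReal (φ i x))
    (lam : ℝ) (hlam : lam ∈ Ioo (0:ℝ) 1)
    (A B : Set (Fin n → ℝ)) (hA : A.Nonempty) (hB : B.Nonempty)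
    (hAw : WeaklyUnconditional A) (hBw : WeaklyUnconditional B)
    (hAm : MeasurableSet A) (hBm : MeasurableSet B)
    (hCm : MeasurableSet ((1 - lam) • A + lam • B)) :
    ENNReal.ofReal (1 - lam) * μ A ^ (1/(n:ℝ)) + ENNReal.ofReal lam * μ B ^ (1/(n:ℝ))
      ≤ μ ((1 - lam) • A + lam • B) ^ (1/(n:ℝ)) := by
  have l1' : 0 < 1 - lam := by linarith [hlam.2]
  have l0 := hlam.1
  have hnR : (0:ℝ) < n := by exact_mod_cast hn
  have hexp : 0 < 1 / (n:ℝ) := by positivity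
  set ν : Fin n → Measure ℝ := fun i => (volume : Measure ℝ).withDensity
      fun x => ENNReal.ofReal (φ i x) with hν
  have sf : ∀ i, SigmaFinite (ν i) := fun i => by
    rw [hν]; exact SigmaFinite.withDensity_ofReal _
  set C := (1 - lam) • A + lam • B with hC
  set box : ℕ → Set (Fin n → ℝ) := fun R => univ.pi fun _ => Icc (-(R:ℝ)) R with hbox
  have boxm : Monotone box := by
    intro R S hRS x hx i hi
    have : (R:ℝ) ≤ S := by exact_mod_cast hRS
    exact Icc_subset_Icc (by linarith) this (hx i hi)
  have boxu : ⋃ R, box R = univ := by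
    rw [eq_univ_iff_forall]
    intro x
    obtain ⟨R, hR⟩ := exists_nat_ge ‖x‖
    refine mem_iUnion.2 ⟨R, fun i _ => ?_⟩
    have := (norm_le_pi_norm x i).trans hR
    rw [Real.norm_eq_abs, abs_le] at this
    exact this
  have step : ∀ R : ℕ, ENNReal.ofReal (1 - lam) * μ (A ∩ box R) ^ (1/(n:ℝ)) +
      ENNReal.ofReal lam * μ (B ∩ box R) ^ (1/(n:ℝ)) ≤ μ C ^ (1/(n:ℝ)) := by
    intro R
    have : ∀ i, IsFiniteMeasure ((ν i).restrict (Icc (-(R:ℝ)) R)) :=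
      fun i => density_restrict_finite (hφdec i) R
    have hs := sumProp_all hlam hn (fun i => (ν i).restrict (Icc (-(R:ℝ)) R))
      (fun i => oneProp_restrict hlam (oneProp_density (hφdec i) (hφ0 i) (hφmeas i) hlam) R
        (by positivity)) A B C hAm hBm hCm hA hB hAw hBw
      (fun x hx y hy => add_mem_add (smul_mem_smul_set hx) (smul_mem_smul_set hy))
    have hr := Measure.restrict_pi_pi ν (fun _ => Icc (-(R:ℝ)) R)
    have hfin : IsFiniteMeasure (Measure.pi fun i => (ν i).restrict (Icc (-(R:ℝ)) R)) := inferInstance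
    rw [← hr, ← hμ] at hs hfin
    change IsFiniteMeasure (μ.restrict (box R)) at hfin
    change (1 - lam) * (μ.restrict (box R)).real A ^ (1 / (n:ℝ)) +
      lam * (μ.restrict (box R)).real B ^ (1 / (n:ℝ)) ≤
      (μ.restrict (box R)).real C ^ (1 / (n:ℝ)) at hs
    have hs2 := ENNReal.ofReal_le_ofReal hs
    rw [ENNReal.ofReal_add (by positivity) (by positivity), ENNReal.ofReal_mul l1'.le,
      ENNReal.ofReal_mul l0.le, ← ENNReal.ofReal_rpow_of_nonneg measureReal_nonneg hexp.le,
      ← ENNReal.ofReal_rpow_of_nonneg measureReal_nonneg hexp.le,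
      ← ENNReal.ofReal_rpow_of_nonneg measureReal_nonneg hexp.le,
      ofReal_measureReal, ofReal_measureReal, ofReal_measureReal,
      Measure.restrict_apply hAm, Measure.restrict_apply hBm] at hs2
    exact hs2.trans (ENNReal.rpow_le_rpow (Measure.restrict_apply_le _ _) hexp.le)
  have lim : ∀ S : Set (Fin n → ℝ), Tendsto (fun R : ℕ => μ (S ∩ box R) ^ (1/(n:ℝ))) atTop
      (𝓝 (μ S ^ (1/(n:ℝ)))) := by
    intro S
    have h1 := tendsto_measure_iUnion_atTop (μ := μ) (s := fun R => S ∩ box R)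
      (fun R R' h => inter_subset_inter_right _ (boxm h))
    rw [← inter_iUnion, boxu, inter_univ] at h1
    exact (ENNReal.continuous_rpow_const.tendsto _).comp h1
  refine le_of_tendsto' (Tendsto.add (ENNReal.Tendsto.const_mul (lim A) (Or.inr (by simp)))
    (ENNReal.Tendsto.const_mul (lim B) (Or.inr (by simp)))) step

end
end

section
/- Let (X,d_X,μ_X) and (Y,d_Y,μ_Y) be metric measure spaces with μ_X σ-finite, μ_Y locally finite and μ_{X×Y} a Radon measure. If (X,d_X,μ_X) satisfies the general inequality B̄M(1) and (Y,d_Y,μ_Y) satisfies BM(p) for some p≥−1, then (X×Y,ρ,μ_{X×Y}) satisfies BM(1/(1+p⁻¹)), where 1/(1+p⁻¹) is interpreted as 0 when p=0 and as 1 when p=∞. -/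
open MeasureTheory Set Metric Filter
open scoped ENNReal NNReal Topology Pointwise

noncomputable section

lemma holder2 {l x1 x2 y1 y2 α β : ℝ} (hl0 : 0 < l) (hl1 : l < 1) (hx1 : 0 < x1) (hx2 : 0 < x2)
    (hy1 : 0 < y1) (hy2 : 0 < y2) (hα : 0 < α) (hβ : 0 < β) (h : α + β = 1) :
    (1 - l) * (x1 ^ α * y1 ^ β) + l * (x2 ^ α * y2 ^ β)
      ≤ ((1 - l) * x1 + l * x2) ^ α * ((1 - l) * y1 + l * y2) ^ β := by
  have hl : 0 < 1 - l := by linarith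
  set S := (1 - l) * x1 + l * x2 with hS
  set T := (1 - l) * y1 + l * y2 with hT
  have hSp : 0 < S := by positivity
  have hTp : 0 < T := by positivity
  have key : ∀ x y : ℝ, 0 < x → 0 < y → x ^ α * y ^ β ≤ (α * (x / S) + β * (y / T)) * (S ^ α * T ^ β) := by
    intro x y hx hy
    have := Real.geom_mean_le_arith_mean2_weighted hα.le hβ.le (div_pos hx hSp).le (div_pos hy hTp).le h
    rw [Real.div_rpow hx.le hSp.le, Real.div_rpow hy.le hTp.le] at this
    have h1 : 0 < S ^ α := by positivity
    have h2 : 0 < T ^ β := by positivity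
    calc x ^ α * y ^ β = (x ^ α / S ^ α * (y ^ β / T ^ β)) * (S ^ α * T ^ β) := by field_simp
      _ ≤ _ := by gcongr
  calc _ ≤ (1 - l) * ((α * (x1 / S) + β * (y1 / T)) * (S ^ α * T ^ β))
        + l * ((α * (x2 / S) + β * (y2 / T)) * (S ^ α * T ^ β)) := by
        exact add_le_add (mul_le_mul_of_nonneg_left (key _ _ hx1 hy1) hl.le)
          (mul_le_mul_of_nonneg_left (key _ _ hx2 hy2) hl0.le)
    _ = (α * (S / S) + β * (T / T)) * (S ^ α * T ^ β) := by rw [hS, hT]; ring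
    _ = _ := by rw [div_self hSp.ne', div_self hTp.ne', mul_one, mul_one, h, one_mul]

lemma mean_pos {l F G u v p : ℝ} (hl0 : 0 < l) (hl1 : l < 1) (hF : 0 < F) (hG : 0 < G)
    (hu : 0 < u) (hv : 0 < v) (hp : 0 < p) :
    ((1 - l) * (F * u) ^ (p / (p + 1)) + l * (G * v) ^ (p / (p + 1))) ^ (1 / (p / (p + 1)))
      ≤ ((1 - l) * F ^ p + l * G ^ p) ^ (1 / p) * ((1 - l) * u + l * v) := by
  have hl : 0 < 1 - l := by linarith
  have h := holder2 (α := 1 / (p + 1)) (β := p / (p + 1)) hl0 hl1 (Real.rpow_pos_of_pos hF p)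
    (Real.rpow_pos_of_pos hG p) hu hv (by positivity) (by positivity) (by field_simp; ring)
  rw [← Real.rpow_mul hF.le, ← Real.rpow_mul hG.le, mul_one_div,
    ← Real.mul_rpow hF.le hu.le, ← Real.mul_rpow hG.le hv.le] at h
  have h3 := Real.rpow_le_rpow (z := 1 / (p / (p + 1))) (by positivity) h (by positivity)
  refine h3.trans (le_of_eq ?_)
  rw [Real.mul_rpow (by positivity) (by positivity), ← Real.rpow_mul (by positivity),
    ← Real.rpow_mul (by positivity)]
  rw [show 1 / (p + 1) * (1 / (p / (p + 1))) = 1 / p by field_simp,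
    show p / (p + 1) * (1 / (p / (p + 1))) = 1 by field_simp, Real.rpow_one]

lemma mean_neg {l F G u v p : ℝ} (hl0 : 0 < l) (hl1 : l < 1) (hF : 0 < F) (hG : 0 < G)
    (hu : 0 < u) (hv : 0 < v) (hp : p < 0) (hp1 : 0 < p + 1) :
    ((1 - l) * (F * u) ^ (p / (p + 1)) + l * (G * v) ^ (p / (p + 1))) ^ (1 / (p / (p + 1)))
      ≤ ((1 - l) * F ^ p + l * G ^ p) ^ (1 / p) * ((1 - l) * u + l * v) := by
  have hl : 0 < 1 - l := by linarith
  have h := holder2 (α := p + 1) (β := -p) (x1 := (F * u) ^ (p / (p + 1)))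
    (x2 := (G * v) ^ (p / (p + 1))) hl0 hl1 (by positivity) (by positivity)
    hu hv hp1 (by linarith) (by ring)
  have hne : p ≠ 0 := hp.ne
  rw [← Real.rpow_mul (by positivity), ← Real.rpow_mul (by positivity),
    show p / (p + 1) * (p + 1) = p by field_simp, Real.mul_rpow hF.le hu.le,
    Real.mul_rpow hG.le hv.le, mul_assoc, mul_assoc, ← Real.rpow_add hu, ← Real.rpow_add hv,
    add_neg_cancel, Real.rpow_zero, Real.rpow_zero, mul_one, mul_one] at h
  set S := (1 - l) * (F * u) ^ (p / (p + 1)) + l * (G * v) ^ (p / (p + 1)) with hS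
  set U := (1 - l) * u + l * v with hU
  have hSp : 0 < S := by positivity
  have hUp : 0 < U := by positivity
  have h3 := Real.rpow_le_rpow_of_nonpos (z := 1 / p) (by positivity) h
    (one_div_nonpos.2 hp.le)
  rw [Real.mul_rpow (by positivity) (by positivity), ← Real.rpow_mul hSp.le,
    ← Real.rpow_mul hUp.le, show -p * (1 / p) = -1 by field_simp, Real.rpow_neg_one,
    show (p + 1) * (1 / p) = 1 / (p / (p + 1)) by field_simp] at h3
  rwa [← div_eq_mul_inv, div_le_iff₀ hUp] at h3

lemma mean_neg_one {l F G u v : ℝ} (hl0 : 0 < l) (hl1 : l < 1) (hF : 0 < F) (hG : 0 < G)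
    (hu : 0 < u) (hv : 0 < v) :
    min (F * u) (G * v)
      ≤ ((1 - l) * F ^ (-1 : ℝ) + l * G ^ (-1 : ℝ)) ^ (1 / (-1 : ℝ)) * ((1 - l) * u + l * v) := by
  have hl : 0 < 1 - l := by linarith
  have e : (1 / (-1 : ℝ)) = -1 := by norm_num
  rw [e, Real.rpow_neg_one, Real.rpow_neg_one, Real.rpow_neg_one, inv_mul_eq_div,
    le_div_iff₀ (by positivity)]
  have h1 : min (F * u) (G * v) * F⁻¹ ≤ u := by
    rw [← div_eq_mul_inv, div_le_iff₀ hF, mul_comm u]; exact min_le_left _ _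
  have h2 : min (F * u) (G * v) * G⁻¹ ≤ v := by
    rw [← div_eq_mul_inv, div_le_iff₀ hG, mul_comm v]; exact min_le_right _ _
  nlinarith

/-- the exponent of the conclusion -/
def qexp (p : EReal) : EReal := open Classical in
  if p = 0 then (0 : EReal) else if p = ⊤ then (1 : EReal)
       else if p.toReal + 1 = 0 then (⊥ : EReal)
       else ((p.toReal / (p.toReal + 1) : ℝ) : EReal)

lemma Mp_real {r l a b : ℝ} (hr : r ≠ 0) (hl0 : 0 < l) (hl1 : l < 1) (ha : 0 < a) (hb : 0 < b) :
    Mp (r : EReal) l (ENNReal.ofReal a) (ENNReal.ofReal b)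
      = ENNReal.ofReal (((1 - l) * a ^ r + l * b ^ r) ^ (1 / r)) := by
  have hl : 0 < 1 - l := by linarith
  have hn : ¬ (ENNReal.ofReal a = 0 ∨ ENNReal.ofReal b = 0) := by
    simp only [ENNReal.ofReal_eq_zero]; push Not; exact ⟨ha, hb⟩
  unfold Mp
  rw [if_neg hn, if_neg (EReal.coe_ne_top r), if_neg (EReal.coe_ne_bot r),
    if_neg (by exact_mod_cast hr), EReal.toReal_coe, ENNReal.ofReal_rpow_of_pos ha,
    ENNReal.ofReal_rpow_of_pos hb, ← ENNReal.ofReal_mul hl.le, ← ENNReal.ofReal_mul hl0.le,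
    ← ENNReal.ofReal_add (by positivity) (by positivity), ENNReal.ofReal_rpow_of_pos (by positivity)]

lemma Mp_top {l : ℝ} {a b : ℝ≥0∞} (ha : a ≠ 0) (hb : b ≠ 0) : Mp ⊤ l a b = max a b := by
  simp [Mp, ha, hb]

lemma Mp_bot {l : ℝ} {a b : ℝ≥0∞} (ha : a ≠ 0) (hb : b ≠ 0) : Mp ⊥ l a b = min a b := by
  simp [Mp, ha, hb]

lemma Mp_zero {l : ℝ} {a b : ℝ≥0∞} (ha : a ≠ 0) (hb : b ≠ 0) :
    Mp 0 l a b = a ^ (1 - l) * b ^ l := by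
  simp [Mp, ha, hb]

/-- a positive finite real representative -/
lemma exists_ofReal {a : ℝ≥0∞} (h0 : a ≠ 0) (h1 : a ≠ ⊤) : ∃ r : ℝ, 0 < r ∧ a = ENNReal.ofReal r :=
  ⟨a.toReal, ENNReal.toReal_pos h0 h1, (ENNReal.ofReal_toReal h1).symm⟩

lemma real_or_top {p : EReal} (hp : (-1 : EReal) ≤ p) : p = ⊤ ∨ ∃ r : ℝ, p = (r : EReal) ∧ -1 ≤ r := by
  induction p with
  | bot => exact absurd hp (not_le.2 (EReal.bot_lt_coe (-1)))
  | top => exact Or.inl rfl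
  | coe r => exact Or.inr ⟨r, rfl, EReal.coe_le_coe_iff.1 (le_trans (le_of_eq (by simp)) hp)⟩

lemma mean_main {p : EReal} (hp : (-1 : EReal) ≤ p) {l : ℝ} (hl0 : 0 < l) (hl1 : l < 1)
    {F G u v : ℝ≥0∞} (hF : F ≠ 0) (hF' : F ≠ ⊤) (hG : G ≠ 0) (hG' : G ≠ ⊤)
    (hu : u ≠ 0) (hu' : u ≠ ⊤) (hv : v ≠ 0) (hv' : v ≠ ⊤) :
    Mp (qexp p) l (F * u) (G * v)
      ≤ Mp p l F G * (ENNReal.ofReal (1 - l) * u + ENNReal.ofReal l * v) := by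
  have hl : 0 < 1 - l := by linarith
  have hFx := exists_ofReal hF hF'
  clear hF hF'
  obtain ⟨F, hF, rfl⟩ := hFx
  have hGx := exists_ofReal hG hG'
  clear hG hG'
  obtain ⟨G, hG, rfl⟩ := hGx
  have hux := exists_ofReal hu hu'
  clear hu hu'
  obtain ⟨u, hu, rfl⟩ := hux
  have hvx := exists_ofReal hv hv'
  clear hv hv'
  obtain ⟨v, hv, rfl⟩ := hvx
  have nz : ∀ {x : ℝ}, 0 < x → ENNReal.ofReal x ≠ 0 := fun h => (ENNReal.ofReal_pos.2 h).ne'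
  rw [← ENNReal.ofReal_mul hl.le, ← ENNReal.ofReal_mul hl0.le,
    ← ENNReal.ofReal_add (by positivity) (by positivity), ← ENNReal.ofReal_mul hF.le,
    ← ENNReal.ofReal_mul hG.le]
  have hFu : 0 < F * u := by positivity
  have hGv : 0 < G * v := by positivity
  rcases real_or_top hp with rfl | ⟨r, rfl, hr⟩
  · have : qexp ⊤ = ((1 : ℝ) : EReal) := by simp [qexp]
    rw [this, Mp_real one_ne_zero hl0 hl1 hFu hGv, Mp_top (nz hF) (nz hG),
      ← ENNReal.ofReal_max, ← ENNReal.ofReal_mul (by positivity)]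
    apply ENNReal.ofReal_le_ofReal
    simp only [Real.rpow_one, div_one]
    have h1 : F * u ≤ max F G * u := by gcongr; exact le_max_left _ _
    have h2 : G * v ≤ max F G * v := by gcongr; exact le_max_right _ _
    nlinarith
  · by_cases hr0 : r = 0
    · subst hr0
      have : qexp ((0 : ℝ) : EReal) = 0 := by simp [qexp]
      rw [this, EReal.coe_zero, Mp_zero (nz hFu) (nz hGv), Mp_zero (nz hF) (nz hG),
        ENNReal.ofReal_rpow_of_pos hFu, ENNReal.ofReal_rpow_of_pos hGv,
        ENNReal.ofReal_rpow_of_pos hF, ENNReal.ofReal_rpow_of_pos hG,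
        ← ENNReal.ofReal_mul (by positivity), ← ENNReal.ofReal_mul (by positivity),
        ← ENNReal.ofReal_mul (by positivity)]
      apply ENNReal.ofReal_le_ofReal
      rw [Real.mul_rpow hF.le hu.le, Real.mul_rpow hG.le hv.le]
      have := Real.geom_mean_le_arith_mean2_weighted hl.le hl0.le hu.le hv.le (by ring)
      calc _ = (F ^ (1 - l) * G ^ l) * (u ^ (1 - l) * v ^ l) := by ring
        _ ≤ _ := by gcongr
    · have hr0' : ((r : ℝ) : EReal) ≠ 0 := by exact_mod_cast hr0
      rw [Mp_real hr0 hl0 hl1 hF hG, ← ENNReal.ofReal_mul (by positivity)]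
      by_cases hr1 : r + 1 = 0
      · have : qexp (r : EReal) = ⊥ := by simp [qexp, hr0, hr1]
        rw [this, Mp_bot (nz hFu) (nz hGv), ← ENNReal.ofReal_min]
        apply ENNReal.ofReal_le_ofReal
        obtain rfl : r = -1 := by linarith
        exact mean_neg_one hl0 hl1 hF hG hu hv
      · have : qexp (r : EReal) = ((r / (r + 1) : ℝ) : EReal) := by simp [qexp, hr0, hr1]
        rw [this, Mp_real (div_ne_zero hr0 hr1) hl0 hl1 hFu hGv]
        apply ENNReal.ofReal_le_ofReal
        rcases lt_or_gt_of_ne hr0 with h | h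
        · exact mean_neg hl0 hl1 hF hG hu hv h (lt_of_le_of_ne (by linarith) (Ne.symm hr1))
        · exact mean_pos hl0 hl1 hF hG hu hv h

lemma ennrpow_anti {a b : ℝ≥0∞} {r : ℝ} (hr : r ≤ 0) (h : a ≤ b) : b ^ r ≤ a ^ r := by
  have := ENNReal.inv_le_inv.2 (ENNReal.rpow_le_rpow h (neg_nonneg.2 hr))
  rwa [← ENNReal.rpow_neg, ← ENNReal.rpow_neg, neg_neg] at this

lemma Mp_mono {p : EReal} {l : ℝ} (hl0 : 0 < l) (hl1 : l < 1) {a b c d : ℝ≥0∞}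
    (hac : a ≤ c) (hbd : b ≤ d) : Mp p l a b ≤ Mp p l c d := by
  have hl : 0 < 1 - l := by linarith
  by_cases h : a = 0 ∨ b = 0
  · simp [Mp, h]
  have h' : ¬ (c = 0 ∨ d = 0) := by
    rintro (rfl | rfl)
    · exact h (Or.inl (le_antisymm hac bot_le))
    · exact h (Or.inr (le_antisymm hbd bot_le))
  unfold Mp
  rw [if_neg h, if_neg h']
  split_ifs with h1 h2 h3
  · exact max_le_max hac hbd
  · exact min_le_min hac hbd
  · gcongr
  · rcases le_total 0 p.toReal with hp | hp
    · have := one_div_nonneg.2 hp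
      gcongr
    · apply ennrpow_anti (one_div_nonpos.2 hp)
      exact add_le_add (mul_le_mul_right (ennrpow_anti hp hac) _)
        (mul_le_mul_right (ennrpow_anti hp hbd) _)

lemma Mp_smul {p : EReal} (hp : (-1 : EReal) ≤ p) {l t : ℝ} (hl0 : 0 < l) (hl1 : l < 1) (ht : 0 < t)
    {F G : ℝ≥0∞} (hF : F ≠ 0) (hF' : F ≠ ⊤) (hG : G ≠ 0) (hG' : G ≠ ⊤) :
    Mp p l (ENNReal.ofReal t * F) (ENNReal.ofReal t * G) = ENNReal.ofReal t * Mp p l F G := by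
  have hl : 0 < 1 - l := by linarith
  have hFx := exists_ofReal hF hF'
  clear hF hF'
  obtain ⟨F, hF, rfl⟩ := hFx
  have hGx := exists_ofReal hG hG'
  clear hG hG'
  obtain ⟨G, hG, rfl⟩ := hGx
  have nz : ∀ {x : ℝ}, 0 < x → ENNReal.ofReal x ≠ 0 := fun h => (ENNReal.ofReal_pos.2 h).ne'
  rw [← ENNReal.ofReal_mul ht.le, ← ENNReal.ofReal_mul ht.le]
  have htF : 0 < t * F := by positivity
  have htG : 0 < t * G := by positivity
  rcases real_or_top hp with rfl | ⟨r, rfl, hr⟩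
  · rw [Mp_top (nz hF) (nz hG), Mp_top (nz htF) (nz htG), ← ENNReal.ofReal_max,
      ← ENNReal.ofReal_max, ← ENNReal.ofReal_mul ht.le, mul_max_of_nonneg _ _ ht.le]
  · by_cases hr0 : r = 0
    · subst hr0
      rw [EReal.coe_zero, Mp_zero (nz htF) (nz htG), Mp_zero (nz hF) (nz hG),
        ENNReal.ofReal_rpow_of_pos htF, ENNReal.ofReal_rpow_of_pos htG,
        ENNReal.ofReal_rpow_of_pos hF, ENNReal.ofReal_rpow_of_pos hG,
        ← ENNReal.ofReal_mul (by positivity), ← ENNReal.ofReal_mul (by positivity),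
        ← ENNReal.ofReal_mul (by positivity), Real.mul_rpow ht.le hF.le, Real.mul_rpow ht.le hG.le]
      congr 1
      calc _ = (t ^ (1 - l) * t ^ l) * (F ^ (1 - l) * G ^ l) := by ring
        _ = _ := by rw [← Real.rpow_add ht]; simp
    · rw [Mp_real hr0 hl0 hl1 htF htG, Mp_real hr0 hl0 hl1 hF hG, ← ENNReal.ofReal_mul ht.le,
        Real.mul_rpow ht.le hF.le, Real.mul_rpow ht.le hG.le]
      congr 1
      calc _ = (t ^ r * ((1 - l) * F ^ r + l * G ^ r)) ^ (1 / r) := by ring_nf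
        _ = _ := by
          rw [Real.mul_rpow (by positivity) (by positivity), ← Real.rpow_mul ht.le,
            mul_one_div_cancel hr0, Real.rpow_one]

lemma Mp_ne {p : EReal} (hp : (-1 : EReal) ≤ p) {l : ℝ} (hl0 : 0 < l) (hl1 : l < 1)
    {F G : ℝ≥0∞} (hF : F ≠ 0) (hF' : F ≠ ⊤) (hG : G ≠ 0) (hG' : G ≠ ⊤) :
    Mp p l F G ≠ 0 ∧ Mp p l F G ≠ ⊤ := by
  have hl : 0 < 1 - l := by linarith
  have hFx := exists_ofReal hF hF'
  clear hF hF'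
  obtain ⟨F, hF, rfl⟩ := hFx
  have hGx := exists_ofReal hG hG'
  clear hG hG'
  obtain ⟨G, hG, rfl⟩ := hGx
  have nz : ∀ {x : ℝ}, 0 < x → ENNReal.ofReal x ≠ 0 := fun h => (ENNReal.ofReal_pos.2 h).ne'
  rcases real_or_top hp with rfl | ⟨r, rfl, hr⟩
  · rw [Mp_top (nz hF) (nz hG), ← ENNReal.ofReal_max]
    exact ⟨nz (by positivity), ENNReal.ofReal_ne_top⟩
  · by_cases hr0 : r = 0
    · subst hr0
      rw [EReal.coe_zero, Mp_zero (nz hF) (nz hG),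
        ENNReal.ofReal_rpow_of_pos hF, ENNReal.ofReal_rpow_of_pos hG,
        ← ENNReal.ofReal_mul (by positivity)]
      exact ⟨nz (by positivity), ENNReal.ofReal_ne_top⟩
    · rw [Mp_real hr0 hl0 hl1 hF hG]
      exact ⟨nz (by positivity), ENNReal.ofReal_ne_top⟩

/-- layer cake for functions with values in `[0,1]` -/
lemma layer_s1 {X : Type*} [MeasurableSpace X] (μ : Measure X) {φ : X → ℝ≥0∞}
    (hφ : AEMeasurable φ μ) (h1 : ∀ x, φ x ≤ 1) :
    ∫⁻ x, φ x ∂μ = ∫⁻ t in Ioo (0:ℝ) 1, μ {x | ENNReal.ofReal t ≤ φ x} := by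
  have hfin : ∀ x, φ x ≠ ⊤ := fun x => ((h1 x).trans_lt ENNReal.one_lt_top).ne
  have e1 : ∫⁻ x, φ x ∂μ = ∫⁻ x, ENNReal.ofReal (φ x).toReal ∂μ := by
    congr 1; ext x; rw [ENNReal.ofReal_toReal (hfin x)]
  rw [e1, lintegral_eq_lintegral_meas_le μ (ae_of_all _ fun x => ENNReal.toReal_nonneg)
    hφ.ennreal_toReal]
  have e2 : ∀ t : ℝ, {a | t ≤ (φ a).toReal} = {x | ENNReal.ofReal t ≤ φ x} := by
    intro t; ext x; simp only [mem_ofPred_eq]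
    rw [ENNReal.ofReal_le_iff_le_toReal (hfin x)]
  simp_rw [e2]
  rw [← Ioc_union_Ioi_eq_Ioi (zero_le_one' ℝ), lintegral_union measurableSet_Ioi
    (Ioc_disjoint_Ioi le_rfl)]
  have e3 : ∫⁻ t in Ioi (1:ℝ), μ {x | ENNReal.ofReal t ≤ φ x} = 0 := by
    rw [setLIntegral_congr_fun (g := fun _ => 0) measurableSet_Ioi, lintegral_zero]
    intro t ht
    have : {x | ENNReal.ofReal t ≤ φ x} = ∅ := by
      ext x; simp only [mem_ofPred_eq, mem_empty_iff_false, iff_false, not_le]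
      exact (h1 x).trans_lt (by simpa using ht)
    simp [this]
  rw [e3, add_zero]
  exact setLIntegral_congr Ioo_ae_eq_Ioc.symm

/-- Functional inequality on `X`. -/
lemma functional {X : Type*} [PseudoMetricSpace X] [MeasurableSpace X] (μ : Measure X)
    (hX : SatisfiesBMbarLinear (dist : X → X → ℝ) μ)
    {p : EReal} (hp : (-1 : EReal) ≤ p) {l : ℝ} (hl0 : 0 < l) (hl1 : l < 1)
    {f g h : X → ℝ≥0∞} (hf : Measurable f) (hg : Measurable g) (hh : AEMeasurable h μ)
    (hfb : ⨆ x, f x ≠ ⊤) (hgb : ⨆ x, g x ≠ ⊤)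
    (If0 : ∫⁻ x, f x ∂μ ≠ 0) (Ig0 : ∫⁻ x, g x ∂μ ≠ 0)
    (If1 : ∫⁻ x, f x ∂μ ≠ ⊤) (Ig1 : ∫⁻ x, g x ∂μ ≠ ⊤)
    (H : ∀ x y z : X, dist z x = l * dist x y → dist z y = (1 - l) * dist x y →
      f x ≠ 0 → g y ≠ 0 → Mp p l (f x) (g y) ≤ h z) :
    Mp (qexp p) l (∫⁻ x, f x ∂μ) (∫⁻ x, g x ∂μ) ≤ ∫⁻ x, h x ∂μ := by
  have hl : 0 < 1 - l := by linarith
  set F := ⨆ x, f x with hFdef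
  set G := ⨆ x, g x with hGdef
  have hsup : ∀ k : X → ℝ≥0∞, ∫⁻ x, k x ∂μ ≠ 0 → ⨆ x, k x ≠ 0 := by
    intro k hk h0
    apply hk
    have : k = fun _ => 0 := by
      ext x; exact le_antisymm ((le_iSup k x).trans h0.le) bot_le
    rw [this, lintegral_zero]
  have hF0 : F ≠ 0 := hsup f If0
  have hG0 : G ≠ 0 := hsup g Ig0
  obtain ⟨hM0, hM1⟩ := Mp_ne hp hl0 hl1 hF0 hfb hG0 hgb
  set M := Mp p l F G with hM
  have lev : ∀ k : X → ℝ≥0∞, ⨆ x, k x ≠ 0 → ⨆ x, k x ≠ ⊤ → ∀ t ∈ Ioo (0:ℝ) 1,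
      {x | ENNReal.ofReal t ≤ k x / ⨆ x, k x}.Nonempty := by
    intro k h0 h1 t ht
    have : ENNReal.ofReal t * ⨆ x, k x < ⨆ x, k x := by
      calc _ < 1 * ⨆ x, k x := by
            apply ENNReal.mul_lt_mul_left h0 h1
            simpa using ht.2
        _ = _ := one_mul _
    obtain ⟨x, hx⟩ := lt_iSup_iff.1 this
    refine ⟨x, ?_⟩
    simp only [mem_ofPred_eq]
    rw [ENNReal.le_div_iff_mul_le (Or.inl h0) (Or.inl h1)]
    exact hx.le
  have hlevel : ∀ t ∈ Ioo (0:ℝ) 1,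
      ENNReal.ofReal (1 - l) * μ {x | ENNReal.ofReal t ≤ f x / F}
        + ENNReal.ofReal l * μ {x | ENNReal.ofReal t ≤ g x / G}
      ≤ μ {x | ENNReal.ofReal t ≤ min (h x / M) 1} := by
    intro t ht
    rw [← measure_toMeasurable {x | ENNReal.ofReal t ≤ min (h x / M) 1}]
    refine hX l ⟨hl0, hl1⟩ _ _ _ (lev f hF0 hfb t ht) (lev g hG0 hgb t ht)
      (measurableSet_le measurable_const (hf.div_const _))
      (measurableSet_le measurable_const (hg.div_const _))
      (measurableSet_toMeasurable _ _) (Subset.trans ?_ (subset_toMeasurable _ _))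
    rintro z ⟨a, ha, b, hb, h1, h2⟩
    simp only [mem_ofPred_eq] at ha hb ⊢
    rw [ENNReal.le_div_iff_mul_le (Or.inl hF0) (Or.inl hfb)] at ha
    rw [ENNReal.le_div_iff_mul_le (Or.inl hG0) (Or.inl hgb)] at hb
    have t0 : ENNReal.ofReal t ≠ 0 := (ENNReal.ofReal_pos.2 ht.1).ne'
    have fa : f a ≠ 0 := by
      intro h0; rw [h0] at ha; exact mul_ne_zero t0 hF0 (le_antisymm ha bot_le)
    have gb : g b ≠ 0 := by
      intro h0; rw [h0] at hb; exact mul_ne_zero t0 hG0 (le_antisymm hb bot_le)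
    refine le_min ?_ (by simpa using ht.2.le)
    rw [ENNReal.le_div_iff_mul_le (Or.inl hM0) (Or.inl hM1), hM,
      ← Mp_smul hp hl0 hl1 ht.1 hF0 hfb hG0 hgb]
    exact (Mp_mono hl0 hl1 ha hb).trans (H a b z h1 h2 fa gb)
  have hdiv : ∀ k : X → ℝ≥0∞, ∀ x, k x / (⨆ x, k x) ≤ 1 := fun k x =>
    ENNReal.div_le_of_le_mul (by rw [one_mul]; exact le_iSup k x)
  have meas : ∀ k : X → ℝ≥0∞, Measurable fun t : ℝ => μ {x | ENNReal.ofReal t ≤ k x} := by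
    intro k
    apply Antitone.measurable
    intro s t hst
    exact measure_mono fun x hx => (ENNReal.ofReal_le_ofReal hst).trans hx
  have hint : ENNReal.ofReal (1 - l) * (∫⁻ x, f x / F ∂μ) + ENNReal.ofReal l * (∫⁻ x, g x / G ∂μ)
      ≤ ∫⁻ x, min (h x / M) 1 ∂μ := by
    rw [layer_s1 μ (hf.div_const _).aemeasurable (hdiv f), layer_s1 μ (hg.div_const _).aemeasurable (hdiv g),
      layer_s1 μ ((hh.div_const _).min aemeasurable_const) (fun x => min_le_right _ _),
      ← lintegral_const_mul' _ _ ENNReal.ofReal_ne_top, ← lintegral_const_mul' _ _ ENNReal.ofReal_ne_top,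
      ← lintegral_add_left ((meas _).const_mul _)]
    exact setLIntegral_mono' measurableSet_Ioo hlevel
  have hlast : M * ∫⁻ x, min (h x / M) 1 ∂μ ≤ ∫⁻ x, h x ∂μ := by
    rw [← lintegral_const_mul' _ _ hM1]
    apply lintegral_mono
    intro x
    calc M * min (h x / M) 1 ≤ M * (h x / M) := by gcongr; exact min_le_left _ _
      _ = h x := ENNReal.mul_div_cancel hM0 hM1
  have hFi : ∫⁻ x, f x / F ∂μ = (∫⁻ x, f x ∂μ) / F := by
    simp_rw [div_eq_mul_inv]; rw [lintegral_mul_const _ hf]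
  have hGi : ∫⁻ x, g x / G ∂μ = (∫⁻ x, g x ∂μ) / G := by
    simp_rw [div_eq_mul_inv]; rw [lintegral_mul_const _ hg]
  have hmm := mean_main hp hl0 hl1 hF0 hfb hG0 hgb
    (u := (∫⁻ x, f x ∂μ) / F) (v := (∫⁻ x, g x ∂μ) / G)
    (ENNReal.div_ne_zero.2 ⟨If0, hfb⟩) (ENNReal.div_ne_top If1 hF0)
    (ENNReal.div_ne_zero.2 ⟨Ig0, hgb⟩) (ENNReal.div_ne_top Ig1 hG0)
  rw [ENNReal.mul_div_cancel hF0 hfb, ENNReal.mul_div_cancel hG0 hgb] at hmm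
  refine hmm.trans (le_trans ?_ hlast)
  rw [← hFi, ← hGi]
  gcongr

lemma compact_meas {X Y : Type*} [MetricSpace X] [MetricSpace Y]
    [MeasurableSpace X] [OpensMeasurableSpace X] [MeasurableSpace Y] [OpensMeasurableSpace Y]
    {K : Set (X × Y)} (hK : IsCompact K) : MeasurableSet K := by
  have hfin : ∀ n : ℕ, ∃ t : Set (X × Y), t ⊆ K ∧ t.Finite ∧ K ⊆ ⋃ x ∈ t, ball x (1 / ((n : ℝ) + 1)) :=
    fun n => hK.finite_cover_balls (by positivity)
  choose t ht hf hc using hfin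
  have : K = ⋂ n : ℕ, ⋃ x ∈ t n, (ball x.1 (1 / ((n : ℝ) + 1)) ×ˢ ball x.2 (1 / ((n : ℝ) + 1))) := by
    apply Subset.antisymm
    · intro z hz
      simp only [mem_iInter]
      intro n
      have := hc n hz
      simp only [mem_iUnion] at this ⊢
      obtain ⟨x, hx, hzx⟩ := this
      refine ⟨x, hx, ?_⟩
      rw [ball_prod_same]; exact hzx
    · intro z hz
      simp only [mem_iInter, mem_iUnion] at hz
      rw [← hK.isClosed.closure_eq, Metric.mem_closure_iff]
      intro ε hε
      obtain ⟨n, hn⟩ := exists_nat_one_div_lt hε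
      obtain ⟨x, hx, hzx⟩ := hz n
      rw [ball_prod_same] at hzx
      exact ⟨x, ht n hx, (mem_ball.1 hzx).trans hn⟩
  rw [this]
  refine MeasurableSet.iInter fun n => (hf n).measurableSet_biUnion fun x _ => ?_
  exact measurableSet_ball.prod measurableSet_ball

lemma rho_scale {X Y : Type*} [PseudoMetricSpace X] [PseudoMetricSpace Y] {a b c d : X × Y} {k : ℝ}
    (hk : 0 ≤ k) (h1 : dist a.1 b.1 = k * dist c.1 d.1) (h2 : dist a.2 b.2 = k * dist c.2 d.2) :
    rho a b = k * rho c d := by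
  unfold rho
  rw [h1, h2, show (k * dist c.1 d.1) ^ 2 + (k * dist c.2 d.2) ^ 2
    = k ^ 2 * (dist c.1 d.1 ^ 2 + dist c.2 d.2 ^ 2) by ring, Real.sqrt_mul (by positivity),
    Real.sqrt_sq hk]

lemma Mp_tendsto (p : EReal) {l : ℝ} {a b : ℝ≥0∞} (ha : a ≠ 0) (hb : b ≠ 0)
    {u v : ℕ → ℝ≥0∞} (hu : Tendsto u atTop (𝓝 a)) (hv : Tendsto v atTop (𝓝 b))
    (hu0 : ∀ n, u n ≠ 0) (hv0 : ∀ n, v n ≠ 0) (hl0 : 0 < l) (hl1 : l < 1) :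
    Tendsto (fun n => Mp p l (u n) (v n)) atTop (𝓝 (Mp p l a b)) := by
  have hl : 0 < 1 - l := by linarith
  have hn : ∀ n, ¬ (u n = 0 ∨ v n = 0) := fun n => by push Not; exact ⟨hu0 n, hv0 n⟩
  have hn' : ¬ (a = 0 ∨ b = 0) := by push Not; exact ⟨ha, hb⟩
  have rp : ∀ (r : ℝ) {w : ℕ → ℝ≥0∞} {c : ℝ≥0∞}, Tendsto w atTop (𝓝 c) →
      Tendsto (fun n => w n ^ r) atTop (𝓝 (c ^ r)) := fun r w c h =>
    (ENNReal.continuous_rpow_const.tendsto c).comp h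
  unfold Mp
  simp only [hn, hn', if_false]
  split_ifs
  · exact hu.max hv
  · exact hu.min hv
  · refine ENNReal.Tendsto.mul (rp _ hu) (Or.inl ?_) (rp _ hv) (Or.inl ?_)
    · simp [ENNReal.rpow_eq_zero_iff, ha, hl.not_gt]
    · simp [ENNReal.rpow_eq_zero_iff, hb, hl0.not_gt]
  · refine rp _ (Tendsto.add ?_ ?_)
    · exact ENNReal.Tendsto.const_mul (rp _ hu) (Or.inr ENNReal.ofReal_ne_top)
    · exact ENNReal.Tendsto.const_mul (rp _ hv) (Or.inr ENNReal.ofReal_ne_top)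

lemma exists_seq_compact {Z : Type*} [TopologicalSpace Z] [MeasurableSpace Z] (μ : Measure Z)
    [μ.InnerRegular] {A : Set Z} (hA : MeasurableSet A) (h0 : μ A ≠ 0) :
    ∃ K : ℕ → Set Z, (∀ n, K n ⊆ A ∧ IsCompact (K n) ∧ μ (K n) ≠ 0) ∧
      Tendsto (fun n => μ (K n)) atTop (𝓝 (μ A)) := by
  obtain ⟨w, -, hw, hlim⟩ := exists_seq_strictMono_tendsto' (pos_iff_ne_zero.2 h0)
  have : ∀ n, ∃ K ⊆ A, IsCompact K ∧ w n < μ K := fun n => hA.exists_lt_isCompact (hw n).2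
  choose K h1 h2 h3 using this
  refine ⟨K, fun n => ⟨h1 n, h2 n, (bot_le.trans_lt (h3 n)).ne'⟩, ?_⟩
  exact tendsto_of_tendsto_of_tendsto_of_le_of_le hlim tendsto_const_nhds (fun n => (h3 n).le)
    (fun n => measure_mono (h1 n))

lemma compact_section {X Y : Type*} [MetricSpace X] [MetricSpace Y]
    [MeasurableSpace X] [OpensMeasurableSpace X] [MeasurableSpace Y] [OpensMeasurableSpace Y]
    (μY : Measure Y) [IsLocallyFiniteMeasure μY]
    {K : Set (X × Y)} (hK : IsCompact K) :
    Measurable (fun x => μY (Prod.mk x ⁻¹' K)) ∧ ⨆ x, μY (Prod.mk x ⁻¹' K) ≠ ⊤ := by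
  set L := Prod.snd '' K with hL
  have hLc : IsCompact L := hK.image continuous_snd
  have hLt : μY L < ⊤ := hLc.measure_lt_top
  have hsub : ∀ x : X, Prod.mk x ⁻¹' K ⊆ L := fun x y hy => ⟨(x, y), hy, rfl⟩
  constructor
  · have : Fact (μY L < ⊤) := ⟨hLt⟩
    have e : (fun x => μY (Prod.mk x ⁻¹' K)) = fun x => (μY.restrict L) (Prod.mk x ⁻¹' K) := by
      ext x
      rw [Measure.restrict_eq_self _ (hsub x)]
    rw [e]
    exact measurable_measure_prodMk_left (compact_meas hK)
  · exact ((iSup_le fun x => measure_mono (hsub x)).trans_lt hLt).ne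

open Classical in
/-- Theorem B / `t:BM_ProdMetSpa`: if `X` satisfies `B̄M(1)` and `Y`
satisfies `BM(p)` for some `p ≥ -1`, then `X × Y` with the product metric `ρ` and the
product measure satisfies `BM(1/(1+p⁻¹))`. -/
theorem statement1 {X Y : Type*} [MetricSpace X] [MetricSpace Y]
    [MeasurableSpace X] [OpensMeasurableSpace X] [MeasurableSpace Y] [OpensMeasurableSpace Y]
    (μX : Measure X) (μY : Measure Y) [SigmaFinite μX] [IsLocallyFiniteMeasure μY]
    [IsLocallyFiniteMeasure (μX.prod μY)]
    (hdX : StrictlyIntrinsicDist (dist : X → X → ℝ))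
    (hdY : StrictlyIntrinsicDist (dist : Y → Y → ℝ))
    (hRadon : (μX.prod μY).InnerRegular)
    (p : EReal) (hp : (-1 : EReal) ≤ p)
    (hX : SatisfiesBMbarLinear (dist : X → X → ℝ) μX)
    (hY : SatisfiesBM (dist : Y → Y → ℝ) μY p) :
    SatisfiesBM (rho : X × Y → X × Y → ℝ) (μX.prod μY)
      (if p = 0 then (0 : EReal) else if p = ⊤ then (1 : EReal)
       else if p.toReal + 1 = 0 then (⊥ : EReal)
       else ((p.toReal / (p.toReal + 1) : ℝ) : EReal)) := by
  change SatisfiesBM _ _ (qexp p)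
  intro l hl A B C _ _ hA hB hC hA0 hB0 hsub
  obtain ⟨hl0, hl1⟩ := hl
  have hae : AEMeasurable (fun x : X => Measure.map (Prod.mk x) μY) μX := by
    by_contra hcon
    apply hA0
    have : μX.prod μY = 0 := by
      rw [Measure.prod_def, Measure.bind, Measure.map_of_not_aemeasurable hcon, Measure.join_zero]
    rw [this]; rfl
  have happ : ∀ S : Set (X × Y), MeasurableSet S →
      (μX.prod μY) S = ∫⁻ x, μY (Prod.mk x ⁻¹' S) ∂μX := by
    intro S hS
    rw [Measure.prod_def, Measure.bind_apply hS hae]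
    congr 1; ext x
    rw [Measure.map_apply measurable_prodMk_left hS]
  have hCm : AEMeasurable (fun x => μY (Prod.mk x ⁻¹' C)) μX := by
    have := (Measure.measurable_coe hC).comp_aemeasurable hae
    refine this.congr (ae_of_all _ fun x => ?_)
    simp only [Function.comp]
    rw [Measure.map_apply measurable_prodMk_left hC]
  have key : ∀ K L : Set (X × Y), K ⊆ A → L ⊆ B → IsCompact K → IsCompact L →
      (μX.prod μY) K ≠ 0 → (μX.prod μY) L ≠ 0 →
      Mp (qexp p) l ((μX.prod μY) K) ((μX.prod μY) L) ≤ (μX.prod μY) C := by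
    intro K L hKA hLB hK hL hK0 hL0
    have hK1 := (hK.measure_lt_top (μ := μX.prod μY)).ne
    have hL1 := (hL.measure_lt_top (μ := μX.prod μY)).ne
    have mK := compact_meas hK
    have mL := compact_meas hL
    rw [happ K mK] at hK0 hK1 ⊢
    rw [happ L mL] at hL0 hL1 ⊢
    rw [happ C hC]
    refine functional μX hX hp hl0 hl1 (compact_section μY hK).1 (compact_section μY hL).1 hCm
      (compact_section μY hK).2 (compact_section μY hL).2 hK0 hL0 hK1 hL1 ?_
    intro x y z h1 h2 hx hy
    refine hY l ⟨hl0, hl1⟩ _ _ _ (nonempty_of_measure_ne_zero hx) (nonempty_of_measure_ne_zero hy)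
      (measurable_prodMk_left mK) (measurable_prodMk_left mL) (measurable_prodMk_left hC) hx hy ?_
    rintro w ⟨a, ha, b, hb, h3, h4⟩
    exact hsub ⟨(x, a), hKA ha, (y, b), hLB hb, rho_scale hl0.le h1 h3,
      rho_scale (by linarith) h2 h4⟩
  obtain ⟨K, hK, hKt⟩ := exists_seq_compact (μX.prod μY) hA hA0
  obtain ⟨L, hL, hLt⟩ := exists_seq_compact (μX.prod μY) hB hB0
  refine le_of_tendsto' (Mp_tendsto (qexp p) hA0 hB0 hKt hLt (fun n => (hK n).2.2)
    (fun n => (hL n).2.2) hl0 hl1) fun n => ?_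
  exact key _ _ (hK n).1 (hL n).1 (hK n).2.1 (hL n).2.1 (hK n).2.2 (hL n).2.2

end
end

section
/- Let (X,d_X,μ_X) and (Y,d_Y,μ_Y) be metric measure spaces which satisfy the general inequality B̄M(1) and BM(p), respectively, for some p∈ℝ∪{±∞}, with μ_X and μ_Y σ-finite. Let λ∈(0,1) and let A,B⊆X×Y be non-empty measurable sets such that (1−λ)A⋆λB is also measurable and sup_{x∈X} μ_Y(A(x)) = sup_{x∈X} μ_Y(B(x)). Then μ_{X×Y}((1−λ)A⋆λB) ≥ (1−λ)μ_{X×Y}(A) + λμ_{X×Y}(B). -/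
open MeasureTheory Set Metric Filter
open scoped ENNReal NNReal Topology Pointwise

noncomputable section

lemma ennreal_rpow_anti {q : ℝ} (hq : q ≤ 0) {a b : ℝ≥0∞} (h : a ≤ b) : b ^ q ≤ a ^ q := by
  have hb : b ^ q = (b ^ (-q))⁻¹ := by rw [← ENNReal.rpow_neg, neg_neg]
  have ha : a ^ q = (a ^ (-q))⁻¹ := by rw [← ENNReal.rpow_neg, neg_neg]
  rw [ha, hb, ENNReal.inv_le_inv]
  exact ENNReal.rpow_le_rpow h (by linarith)

lemma min_le_Mp (p : EReal) (lam : ℝ) (hlam : lam ∈ Ioo (0:ℝ) 1) (a b : ℝ≥0∞)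
    (ha : a ≠ 0) (hb : b ≠ 0) : min a b ≤ Mp p lam a b := by
  have h1 : 0 < 1 - lam := by linarith [hlam.2]
  have h0 : 0 < lam := hlam.1
  have hw : ENNReal.ofReal (1 - lam) + ENNReal.ofReal lam = 1 := by
    rw [← ENNReal.ofReal_add h1.le h0.le]; simp
  unfold Mp
  rw [if_neg (by tauto)]
  split_ifs with ht hbot hz
  · exact min_le_max
  · exact le_rfl
  · calc min a b = (min a b) ^ (1 - lam) * (min a b) ^ lam := by
          rw [← ENNReal.rpow_add_of_nonneg _ _ h1.le h0.le]; simp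
      _ ≤ _ := mul_le_mul' (ENNReal.rpow_le_rpow (min_le_left _ _) h1.le)
          (ENNReal.rpow_le_rpow (min_le_right _ _) h0.le)
  · have hp : p.toReal ≠ 0 := by
      intro h
      rcases (EReal.toReal_eq_zero_iff).1 h with h | h | h <;> contradiction
    set q := p.toReal
    have hm : min a b = ((min a b) ^ q) ^ (1 / q) := by
      rw [← ENNReal.rpow_mul, mul_one_div_cancel hp, ENNReal.rpow_one]
    have hc : (min a b) ^ q = ENNReal.ofReal (1 - lam) * (min a b) ^ q
        + ENNReal.ofReal lam * (min a b) ^ q := by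
      rw [← add_mul, hw, one_mul]
    rw [hm]
    rcases lt_or_gt_of_ne hp with hq | hq
    · apply ennreal_rpow_anti (by simpa using hq.le)
      rw [hc]
      exact add_le_add (mul_le_mul' le_rfl (ennreal_rpow_anti hq.le (min_le_left _ _)))
        (mul_le_mul' le_rfl (ennreal_rpow_anti hq.le (min_le_right _ _)))
    · apply ENNReal.rpow_le_rpow _ (by positivity)
      rw [hc]
      exact add_le_add (mul_le_mul' le_rfl (ENNReal.rpow_le_rpow (min_le_left _ _) hq.le))
        (mul_le_mul' le_rfl (ENNReal.rpow_le_rpow (min_le_right _ _) hq.le))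

lemma ennreal_layer (c : ℝ≥0∞) :
    c = ∫⁻ t in Ioi (0:ℝ), ({t : ℝ | ENNReal.ofReal t < c}.indicator 1 t) := by
  have hm : MeasurableSet {t : ℝ | ENNReal.ofReal t < c} :=
    measurableSet_lt ENNReal.measurable_ofReal measurable_const
  rw [lintegral_indicator_one hm, Measure.restrict_apply hm]
  by_cases hc : c = ⊤
  · subst hc
    simp
  · have : {t : ℝ | ENNReal.ofReal t < c} ∩ Ioi 0 = Ioo 0 c.toReal := by
      ext t
      simp only [mem_inter_iff, mem_ofPred_eq, mem_Ioi, mem_Ioo]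
      constructor
      · rintro ⟨h, h0⟩
        exact ⟨h0, (ENNReal.ofReal_lt_iff_lt_toReal h0.le hc).1 h⟩
      · rintro ⟨h0, h⟩
        exact ⟨(ENNReal.ofReal_lt_iff_lt_toReal h0.le hc).2 h, h0⟩
    rw [this, Real.volume_Ioo, sub_zero, ENNReal.ofReal_toReal hc]

lemma lintegral_layer {X : Type*} [MeasurableSpace X] (μ : Measure X) [SigmaFinite μ]
    (f : X → ℝ≥0∞) (hf : Measurable f) :
    ∫⁻ x, f x ∂μ = ∫⁻ t in Ioi (0:ℝ), μ {x | ENNReal.ofReal t < f x} := by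
  have hm : MeasurableSet {q : X × ℝ | ENNReal.ofReal q.2 < f q.1} :=
    measurableSet_lt (by fun_prop) (by fun_prop)
  calc ∫⁻ x, f x ∂μ
      = ∫⁻ x, (∫⁻ t in Ioi (0:ℝ),
          ({q : X × ℝ | ENNReal.ofReal q.2 < f q.1}.indicator 1 (x, t))) ∂μ := by
        refine lintegral_congr fun x => ?_
        exact ennreal_layer (f x)
    _ = ∫⁻ t in Ioi (0:ℝ), (∫⁻ x,
          ({q : X × ℝ | ENNReal.ofReal q.2 < f q.1}.indicator 1 (x, t)) ∂μ) := by
        refine lintegral_lintegral_swap ?_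
        exact (measurable_one.indicator hm).aemeasurable
    _ = _ := by
        refine lintegral_congr fun t => ?_
        have ht : MeasurableSet {x | ENNReal.ofReal t < f x} :=
          measurableSet_lt measurable_const hf
        rw [← lintegral_indicator_one ht]
        rfl

lemma rho_comb {X Y : Type*} [MetricSpace X] [MetricSpace Y] {l : ℝ} (hl : 0 ≤ l)
    {z w a b : X × Y} (h1 : dist z.1 w.1 = l * dist a.1 b.1)
    (h2 : dist z.2 w.2 = l * dist a.2 b.2) : rho z w = l * rho a b := by
  unfold rho
  rw [h1, h2, mul_pow, mul_pow, ← mul_add, Real.sqrt_mul (by positivity), Real.sqrt_sq hl]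

/-- Theorem `t:linBM_ProdMetSpa`: linear Brunn–Minkowski inequality on
`X × Y` when `X` satisfies `B̄M(1)`, `Y` satisfies `BM(p)`, and the two sets have equal
maximal sections. -/
theorem statement3 {X Y : Type*} [MetricSpace X] [MetricSpace Y]
    [MeasurableSpace X] [OpensMeasurableSpace X] [MeasurableSpace Y] [OpensMeasurableSpace Y]
    (μX : Measure X) (μY : Measure Y) [SigmaFinite μX] [SigmaFinite μY]
    (hdX : StrictlyIntrinsicDist (dist : X → X → ℝ))
    (hdY : StrictlyIntrinsicDist (dist : Y → Y → ℝ))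
    (p : EReal)
    (hX : SatisfiesBMbarLinear (dist : X → X → ℝ) μX)
    (hY : SatisfiesBM (dist : Y → Y → ℝ) μY p)
    (lam : ℝ) (hlam : lam ∈ Ioo (0:ℝ) 1)
    (A B : Set (X × Y)) (hA : A.Nonempty) (hB : B.Nonempty)
    (hAm : MeasurableSet A) (hBm : MeasurableSet B)
    (hCm : MeasurableSet (starComb (rho : X × Y → X × Y → ℝ) lam A B))
    (hsup : (⨆ x : X, μY {y : Y | (x, y) ∈ A}) = ⨆ x : X, μY {y : Y | (x, y) ∈ B}) :
    ENNReal.ofReal (1 - lam) * (μX.prod μY) A + ENNReal.ofReal lam * (μX.prod μY) B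
      ≤ (μX.prod μY) (starComb (rho : X × Y → X × Y → ℝ) lam A B) := by
  set C := starComb (rho : X × Y → X × Y → ℝ) lam A B with hC
  have h1 : 0 < 1 - lam := by linarith [hlam.2]
  have hAf : Measurable fun x => μY (Prod.mk x ⁻¹' A) := measurable_measure_prodMk_left hAm
  have hBf : Measurable fun x => μY (Prod.mk x ⁻¹' B) := measurable_measure_prodMk_left hBm
  have hCf : Measurable fun x => μY (Prod.mk x ⁻¹' C) := measurable_measure_prodMk_left hCm
  change (⨆ x : X, μY (Prod.mk x ⁻¹' A)) = ⨆ x : X, μY (Prod.mk x ⁻¹' B) at hsup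
  rw [Measure.prod_apply hAm, Measure.prod_apply hBm, Measure.prod_apply hCm,
    lintegral_layer μX _ hAf, lintegral_layer μX _ hBf, lintegral_layer μX _ hCf]
  refine (add_le_add (lintegral_const_mul_le _ _) (lintegral_const_mul_le _ _)).trans ?_
  refine (le_lintegral_add _ _).trans ?_
  refine lintegral_mono fun t => ?_
  by_cases ht : ENNReal.ofReal t < ⨆ x : X, μY (Prod.mk x ⁻¹' A)
  · have hAn := lt_iSup_iff.1 ht
    have hBn := lt_iSup_iff.1 (hsup ▸ ht)
    refine hX lam hlam _ _ _ hAn hBn (measurableSet_lt measurable_const hAf)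
      (measurableSet_lt measurable_const hBf) (measurableSet_lt measurable_const hCf) ?_
    rintro z ⟨x, hx, y, hy, hzx, hzy⟩
    simp only [mem_ofPred_eq] at hx hy ⊢
    have hx0 : μY (Prod.mk x ⁻¹' A) ≠ 0 := (bot_le.trans_lt hx).ne'
    have hy0 : μY (Prod.mk y ⁻¹' B) ≠ 0 := (bot_le.trans_lt hy).ne'
    refine (lt_min hx hy).trans_le ((min_le_Mp p lam hlam _ _ hx0 hy0).trans ?_)
    refine hY lam hlam _ _ _ (nonempty_of_measure_ne_zero hx0) (nonempty_of_measure_ne_zero hy0)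
      (measurable_prodMk_left hAm) (measurable_prodMk_left hBm) (measurable_prodMk_left hCm)
      hx0 hy0 ?_
    rintro w ⟨a, ha, b, hb, hwa, hwb⟩
    exact ⟨(x, a), ha, (y, b), hb, rho_comb hlam.1.le hzx hwa, rho_comb h1.le hzy hwb⟩
  · have hAe : {x | ENNReal.ofReal t < μY (Prod.mk x ⁻¹' A)} = ∅ := by
      ext x
      simp only [mem_ofPred_eq, mem_empty_iff_false, iff_false]
      exact fun h => ht (lt_iSup_iff.2 ⟨x, h⟩)
    have hBe : {x | ENNReal.ofReal t < μY (Prod.mk x ⁻¹' B)} = ∅ := by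
      ext x
      simp only [mem_ofPred_eq, mem_empty_iff_false, iff_false]
      exact fun h => ht (hsup ▸ lt_iSup_iff.2 ⟨x, h⟩)
    simp [hAe, hBe]

end
end

section
/- Let (X,d_X) and (Y,d_Y) be metric spaces and let ρ be the product metric on X×Y. For all non-empty A,B⊆X×Y and λ∈(0,1), the ρ-convex combination (1−λ)A⋆_ρλB equals the set of all z=(z₁,z₂)∈X×Y for which there exist (a₁,a₂)∈A and (b₁,b₂)∈B with d_X(z₁,a₁)=λ·d_X(a₁,b₁), d_X(z₁,b₁)=(1−λ)·d_X(a₁,b₁), d_Y(z₂,a₂)=λ·d_Y(a₂,b₂) and d_Y(z₂,b₂)=(1−λ)·d_Y(a₂,b₂). -/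
open MeasureTheory Set Metric Filter
open scoped ENNReal NNReal Topology Pointwise

noncomputable section

/-- The real-number core: equality case of the triangle inequality in both factors. -/
theorem starProd_core (l p q D r s E : ℝ) (h0 : 0 < l) (h1 : l < 1)
    (hp : 0 ≤ p) (hq : 0 ≤ q) (hr : 0 ≤ r) (hs : 0 ≤ s) (hD : 0 ≤ D) (hE : 0 ≤ E)
    (t1 : D ≤ p + q) (t2 : E ≤ r + s)
    (e1 : p ^ 2 + r ^ 2 = l ^ 2 * (D ^ 2 + E ^ 2))
    (e2 : q ^ 2 + s ^ 2 = (1 - l) ^ 2 * (D ^ 2 + E ^ 2)) :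
    p = l * D ∧ q = (1 - l) * D ∧ r = l * E ∧ s = (1 - l) * E := by
  have hl : 0 < l * (1 - l) := mul_pos h0 (by linarith)
  have key : l * (1 - l) * ((p + q) ^ 2 - D ^ 2) + l * (1 - l) * ((r + s) ^ 2 - E ^ 2)
      + ((1 - l) * p - l * q) ^ 2 + ((1 - l) * r - l * s) ^ 2 = 0 := by
    linear_combination (1 - l) * e1 + l * e2
  have a1 : 0 ≤ (p + q) ^ 2 - D ^ 2 := by nlinarith
  have a2 : 0 ≤ (r + s) ^ 2 - E ^ 2 := by nlinarith
  have b1 := mul_nonneg hl.le a1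
  have b2 := mul_nonneg hl.le a2
  have c1 := sq_nonneg ((1 - l) * p - l * q)
  have c2 := sq_nonneg ((1 - l) * r - l * s)
  have d1 : (p + q) ^ 2 - D ^ 2 = 0 :=
    (mul_eq_zero.mp (by linarith : l * (1 - l) * ((p + q) ^ 2 - D ^ 2) = 0)).resolve_left hl.ne'
  have d2 : (r + s) ^ 2 - E ^ 2 = 0 :=
    (mul_eq_zero.mp (by linarith : l * (1 - l) * ((r + s) ^ 2 - E ^ 2) = 0)).resolve_left hl.ne'
  have f1 : (1 - l) * p - l * q = 0 := pow_eq_zero_iff two_ne_zero |>.mp (by linarith)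
  have f2 : (1 - l) * r - l * s = 0 := pow_eq_zero_iff two_ne_zero |>.mp (by linarith)
  have g1 : p + q = D := (sq_eq_sq₀ (by linarith) hD).mp (by linarith)
  have g2 : r + s = E := (sq_eq_sq₀ (by linarith) hE).mp (by linarith)
  subst g1 g2
  refine ⟨?_, ?_, ?_, ?_⟩ <;> linarith

/-- Squared form of an equation between scaled square roots. -/
theorem sqrt_eq_mul_sqrt_iff (l u v : ℝ) (hl : 0 ≤ l) (hu : 0 ≤ u) (hv : 0 ≤ v) :
    Real.sqrt u = l * Real.sqrt v ↔ u = l ^ 2 * v := by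
  rw [← sq_eq_sq₀ (Real.sqrt_nonneg u) (mul_nonneg hl (Real.sqrt_nonneg v)), mul_pow,
    Real.sq_sqrt hu, Real.sq_sqrt hv]

/-- Proposition `p:starProdSpac`: the `ρ`-convex combination on a product
of metric spaces coincides with the componentwise convex combination. -/
theorem statement5 {X Y : Type*} [MetricSpace X] [MetricSpace Y]
    (lam : ℝ) (hlam : lam ∈ Ioo (0:ℝ) 1)
    (A B : Set (X × Y)) (hA : A.Nonempty) (hB : B.Nonempty) :
    starComb (rho : X × Y → X × Y → ℝ) lam A B =
      {z : X × Y | ∃ a ∈ A, ∃ b ∈ B,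
        dist z.1 a.1 = lam * dist a.1 b.1 ∧ dist z.1 b.1 = (1 - lam) * dist a.1 b.1 ∧
        dist z.2 a.2 = lam * dist a.2 b.2 ∧ dist z.2 b.2 = (1 - lam) * dist a.2 b.2} := by
  obtain ⟨h0, h1⟩ := hlam
  have h1' : 0 ≤ 1 - lam := by linarith
  ext z
  simp only [starComb, rho, mem_setOf_eq]
  refine exists_congr fun a => and_congr_right fun _ => exists_congr fun b =>
    and_congr_right fun _ => ?_
  rw [sqrt_eq_mul_sqrt_iff _ _ _ h0.le (by positivity) (by positivity),
    sqrt_eq_mul_sqrt_iff _ _ _ h1' (by positivity) (by positivity)]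
  constructor
  · rintro ⟨e1, e2⟩
    exact starProd_core lam _ _ _ _ _ _ h0 h1 dist_nonneg dist_nonneg dist_nonneg dist_nonneg
      dist_nonneg dist_nonneg (dist_triangle_left _ _ _) (dist_triangle_left _ _ _) e1 e2
  · rintro ⟨e1, e2, e3, e4⟩
    rw [e1, e2, e3, e4]
    constructor <;> ring

end
end

section
/- Let (X,d,μ) be a metric measure space such that (X,d) is locally compact and μ is a strictly positive Radon measure. If (X,d,μ) satisfies BM(p) for some p>0, then it satisfies the general inequality B̄M(p). -/
open MeasureTheory Set Metric Filter
open scoped ENNReal NNReal Topology Pointwise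

noncomputable section

theorem Mp_lower {p : ℝ} (hp : 0 < p) (lam : ℝ) {a b : ℝ≥0∞} (ha : a ≠ 0) (hb : b ≠ 0) :
    (ENNReal.ofReal (1 - lam) * a ^ p) ^ (1/p) ≤ Mp (p : EReal) lam a b := by
  have h0 : (p : EReal) ≠ 0 := by exact_mod_cast hp.ne'
  simp only [Mp, ha, hb, or_self, if_false, EReal.coe_ne_top, EReal.coe_ne_bot, h0,
    EReal.toReal_coe]
  exact ENNReal.rpow_le_rpow le_self_add (by positivity)

theorem Mp_eq {p : ℝ} (hp : 0 < p) (lam : ℝ) {a b : ℝ≥0∞} (ha : a ≠ 0) (hb : b ≠ 0) :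
    Mp (p : EReal) lam a b =
      (ENNReal.ofReal (1 - lam) * a ^ p + ENNReal.ofReal lam * b ^ p) ^ (1/p) := by
  have h0 : (p : EReal) ≠ 0 := by exact_mod_cast hp.ne'
  simp only [Mp, ha, hb, or_self, if_false, EReal.coe_ne_top, EReal.coe_ne_bot, h0,
    EReal.toReal_coe]

theorem starComb_symm {X : Type*} [MetricSpace X] (lam : ℝ) (A B : Set X) :
    starComb (dist : X → X → ℝ) (1 - lam) B A = starComb dist lam A B := by
  ext z
  constructor
  · rintro ⟨b, hb, a, ha, h1, h2⟩
    exact ⟨a, ha, b, hb, by rw [h2, dist_comm b a]; ring, by rw [h1, dist_comm b a]⟩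
  · rintro ⟨a, ha, b, hb, h1, h2⟩
    exact ⟨b, hb, a, ha, by rw [h2, dist_comm b a], by rw [h1, dist_comm b a]; ring⟩

/-- Under `BM(p)`, bounded sets have finite measure. -/
theorem closedBall_finite {X : Type*} [MetricSpace X]
    [MeasurableSpace X] [OpensMeasurableSpace X]
    (μ : Measure X) [IsLocallyFiniteMeasure μ]
    (hpos : ∀ (x : X) (r : ℝ), 0 < r → 0 < μ (Metric.ball x r))
    (p : ℝ) (hp : 0 < p)
    (hBM : SatisfiesBM (dist : X → X → ℝ) μ (p : EReal)) (b : X) (D : ℝ) (hD : 0 < D) :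
    μ (closedBall b D) ≠ ∞ := by
  intro htop
  obtain ⟨U, hU, hUfin⟩ := μ.finiteAt_nhds b
  obtain ⟨ε, hε, hεU⟩ := Metric.mem_nhds_iff.1 hU
  set s : ℝ := ε / (2 * (D + ε)) with hs
  have hs0 : 0 < s := by positivity
  have hs1 : s < 1 := by rw [hs, div_lt_one (by positivity)]; linarith
  have hsD : s * (D + ε) = ε / 2 := by rw [hs]; field_simp
  have hBpos := (hpos b (ε/4) (by positivity)).ne'
  have hApos : μ (closedBall b D) ≠ 0 := by rw [htop]; simp
  have key := hBM (1 - s) ⟨by linarith, by linarith⟩ (closedBall b D) (ball b (ε/4)) (ball b ε)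
    ⟨b, mem_closedBall_self hD.le⟩ ⟨b, mem_ball_self (by positivity)⟩
    measurableSet_closedBall measurableSet_ball measurableSet_ball hApos hBpos (by
      rintro z ⟨a, ha, b', hb', -, h2⟩
      rw [mem_closedBall] at ha
      rw [mem_ball] at hb' ⊢
      have h3 : dist a b' ≤ D + ε := by
        have := dist_triangle a b b'
        rw [dist_comm b b'] at this
        linarith
      have h4 : s * dist a b' ≤ s * (D + ε) := by gcongr
      have := dist_triangle z b' b
      have h5 : (1 - (1 - s)) * dist a b' = s * dist a b' := by ring
      linarith)
  have h1 := (Mp_lower hp (1 - s) hApos hBpos).trans key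
  rw [htop, ENNReal.top_rpow_of_pos hp, ENNReal.mul_top (by simp [hs0]),
    ENNReal.top_rpow_of_pos (by positivity)] at h1
  exact absurd (lt_of_le_of_lt (h1.trans (measure_mono hεU)) hUfin) (by simp)

theorem isClosed_starComb {X : Type*} [MetricSpace X] (lam : ℝ) {K L : Set X}
    (hK : IsCompact K) (hL : IsCompact L) :
    IsClosed (starComb (dist : X → X → ℝ) lam K L) := by
  have hKc := isCompact_iff_compactSpace.1 hK
  have hLc := isCompact_iff_compactSpace.1 hL
  have hcl : IsClosed {q : X × (K × L) | dist q.1 (q.2.1 : X) = lam * dist (q.2.1 : X) (q.2.2 : X) ∧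
      dist q.1 (q.2.2 : X) = (1 - lam) * dist (q.2.1 : X) (q.2.2 : X)} := by
    apply IsClosed.inter
    · exact isClosed_eq (by fun_prop) (by fun_prop)
    · exact isClosed_eq (by fun_prop) (by fun_prop)
  have := isClosedMap_fst_of_compactSpace (X := X) (Y := K × L) _ hcl
  convert this using 1
  ext z
  constructor
  · rintro ⟨a, ha, b, hb, h⟩
    exact ⟨(z, (⟨a, ha⟩, ⟨b, hb⟩)), h, rfl⟩
  · rintro ⟨⟨z', a, b⟩, h, rfl⟩
    exact ⟨a, a.2, b, b.2, h⟩

/-- The case of a compact set and a point. -/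
theorem compact_point {X : Type*} [MetricSpace X] [LocallyCompactSpace X]
    [MeasurableSpace X] [OpensMeasurableSpace X]
    (μ : Measure X) [IsLocallyFiniteMeasure μ]
    (hpos : ∀ (x : X) (r : ℝ), 0 < r → 0 < μ (Metric.ball x r))
    (p : ℝ) (hp : 0 < p)
    (hBM : SatisfiesBM (dist : X → X → ℝ) μ (p : EReal))
    (lam : ℝ) (hlam : lam ∈ Ioo (0:ℝ) 1) (K : Set X) (hK : IsCompact K) (hK0 : μ K ≠ 0) (b : X) :
    (ENNReal.ofReal (1 - lam) * μ K ^ p) ^ (1/p) ≤ μ (starComb dist lam K {b}) := by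
  obtain ⟨ε, hε, hεc⟩ : ∃ ε > 0, IsCompact (closedBall b ε) := by
    obtain ⟨V, hVc, hV⟩ := exists_compact_mem_nhds b
    obtain ⟨ε, hε, h⟩ := Metric.nhds_basis_closedBall.mem_iff.1 hV
    exact ⟨ε, hε, hVc.of_isClosed_subset isClosed_closedBall h⟩
  set r : ℕ → ℝ := fun n => ε / (n + 1) with hr
  have hr0 : ∀ n, 0 < r n := fun n => by simp only [hr]; positivity
  have hrle : ∀ n, r n ≤ ε := fun n => by
    simp only [hr]; exact div_le_self hε.le (by linarith [(Nat.cast_nonneg n : (0:ℝ) ≤ n)])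
  have hrt : Tendsto r atTop (𝓝 0) := by
    have := (tendsto_one_div_add_atTop_nhds_zero_nat (𝕜 := ℝ)).const_mul ε
    simpa [hr, div_eq_mul_inv] using this
  have hranti : Antitone r := fun m n h => by simp only [hr]; gcongr
  set S : ℕ → Set X := fun n => starComb dist lam K (closedBall b (r n)) with hS
  have hLc : ∀ n, IsCompact (closedBall b (r n)) := fun n =>
    hεc.of_isClosed_subset isClosed_closedBall (closedBall_subset_closedBall (hrle n))
  have hSm : ∀ n, MeasurableSet (S n) := fun n => (isClosed_starComb lam hK (hLc n)).measurableSet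
  have hSanti : Antitone S := by
    rintro m n h z ⟨a, ha, c, hc, h'⟩
    exact ⟨a, ha, c, closedBall_subset_closedBall (hranti h) hc, h'⟩
  have hKne : K.Nonempty := nonempty_of_measure_ne_zero hK0
  obtain ⟨D, hD, hKD⟩ : ∃ D > 0, K ⊆ closedBall b D := by
    obtain ⟨D, hD⟩ := hK.isBounded.subset_closedBall b
    exact ⟨max D 1, by positivity, hD.trans (closedBall_subset_closedBall (le_max_left _ _))⟩
  have hSfin : μ (S 0) ≠ ∞ := by
    refine ne_top_of_le_ne_top
      (closedBall_finite μ hpos p hp hBM b (ε + (D + ε)) (by positivity)) (measure_mono ?_)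
    rintro z ⟨a, ha, c, hc, -, h2⟩
    have ha' := mem_closedBall.1 (hKD ha)
    have hc' := (mem_closedBall.1 hc).trans (hrle 0)
    rw [mem_closedBall]
    have h3 := dist_triangle a b c
    rw [dist_comm b c] at h3
    have h4 := dist_triangle z c b
    have h5 : (1 - lam) * dist a c ≤ dist a c :=
      mul_le_of_le_one_left dist_nonneg (by linarith [hlam.1])
    linarith
  have hinter : ⋂ n, S n ⊆ starComb dist lam K {b} := by
    intro z hz
    rw [mem_iInter] at hz
    choose a ha c hc h1 h2 using hz
    obtain ⟨a₀, ha₀, φ, hφ, hat⟩ := hK.tendsto_subseq ha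
    have hct : Tendsto c atTop (𝓝 b) := by
      rw [tendsto_iff_dist_tendsto_zero]
      exact squeeze_zero (fun _ => dist_nonneg) (fun n => mem_closedBall.1 (hc n)) hrt
    have hct' := hct.comp hφ.tendsto_atTop
    refine ⟨a₀, ha₀, b, rfl, ?_, ?_⟩
    · refine tendsto_nhds_unique (tendsto_const_nhds.dist hat) ?_
      refine ((hat.dist hct').const_mul lam).congr fun n => (h1 (φ n)).symm
    · refine tendsto_nhds_unique (tendsto_const_nhds.dist hct') ?_
      refine ((hat.dist hct').const_mul (1 - lam)).congr fun n => (h2 (φ n)).symm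
  refine le_trans ?_ (measure_mono hinter)
  have hlim := tendsto_measure_iInter_atTop (μ := μ) (fun n => (hSm n).nullMeasurableSet) hSanti
    ⟨0, hSfin⟩
  refine ge_of_tendsto' hlim fun n => ?_
  have hB0 : μ (closedBall b (r n)) ≠ 0 :=
    ((hpos b (r n) (hr0 n)).trans_le (measure_mono ball_subset_closedBall)).ne'
  exact (Mp_lower hp lam hK0 hB0).trans (hBM lam hlam K _ _ hKne
    ⟨b, mem_closedBall_self (hr0 n).le⟩ hK.measurableSet measurableSet_closedBall (hSm n) hK0 hB0
    subset_rfl)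

theorem set_point {X : Type*} [MetricSpace X] [LocallyCompactSpace X]
    [MeasurableSpace X] [OpensMeasurableSpace X]
    (μ : Measure X) [IsLocallyFiniteMeasure μ] (hinner : μ.InnerRegular)
    (hpos : ∀ (x : X) (r : ℝ), 0 < r → 0 < μ (Metric.ball x r))
    (p : ℝ) (hp : 0 < p)
    (hBM : SatisfiesBM (dist : X → X → ℝ) μ (p : EReal))
    (lam : ℝ) (hlam : lam ∈ Ioo (0:ℝ) 1) (A B C : Set X) (hA : MeasurableSet A)
    (hB : B.Nonempty) (hC : starComb dist lam A B ⊆ C) :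
    (ENNReal.ofReal (1 - lam) * μ A ^ p) ^ (1/p) ≤ μ C := by
  obtain ⟨b, hb⟩ := hB
  have hl : ENNReal.ofReal (1 - lam) ≠ 0 := by simpa using hlam.2
  have hl' : ENNReal.ofReal (1 - lam) ≠ ∞ := ENNReal.ofReal_ne_top
  have hm : ∀ x : ℝ≥0∞, (ENNReal.ofReal (1 - lam) * x ^ p) ^ (1/p)
      = ENNReal.ofReal (1 - lam) ^ (1/p) * x := fun x => by
    rw [ENNReal.mul_rpow_of_nonneg _ _ (by positivity), ← ENNReal.rpow_mul,
      mul_one_div_cancel hp.ne', ENNReal.rpow_one]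
  have hK : ∀ K, K ⊆ A → IsCompact K → ENNReal.ofReal (1 - lam) ^ (1/p) * μ K ≤ μ C := by
    intro K hKA hKc
    by_cases h0 : μ K = 0
    · simp [h0]
    rw [← hm]
    refine (compact_point μ hpos p hp hBM lam hlam K hKc h0 b).trans (measure_mono ?_)
    rintro z ⟨a, ha, c, rfl, h⟩
    exact hC ⟨a, hKA ha, c, hb, h⟩
  rw [hm, hA.measure_eq_iSup_isCompact]
  simp only [ENNReal.mul_iSup]
  exact iSup_le fun K => iSup_le fun h1 => iSup_le fun h2 => hK K h1 h2

/-- Proposition `p:BMzeromeas_sets`: on a locally compact metric measure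
space with a strictly positive Radon measure, `BM(p)` for `p > 0` implies the general
inequality `B̄M(p)`. -/
theorem statement6 {X : Type*} [MetricSpace X] [LocallyCompactSpace X]
    [MeasurableSpace X] [OpensMeasurableSpace X]
    (μ : Measure X) [IsLocallyFiniteMeasure μ]
    (hd : StrictlyIntrinsicDist (dist : X → X → ℝ))
    (hinner : μ.InnerRegular)
    (hpos : ∀ (x : X) (r : ℝ), 0 < r → 0 < μ (Metric.ball x r))
    (p : ℝ) (hp : 0 < p)
    (hBM : SatisfiesBM (dist : X → X → ℝ) μ (p : EReal)) :
    SatisfiesBMbarPos (dist : X → X → ℝ) μ p := by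
  intro lam hlam A B C hA hB hAm hBm hCm hC
  by_cases hA0 : μ A = 0
  · have h := set_point μ hinner hpos p hp hBM (1 - lam)
      ⟨by linarith [hlam.2], by linarith [hlam.1]⟩ B A C hBm hA (by rwa [starComb_symm])
    rw [sub_sub_cancel] at h
    rwa [hA0, ENNReal.zero_rpow_of_pos hp, mul_zero, zero_add]
  by_cases hB0 : μ B = 0
  · have h := set_point μ hinner hpos p hp hBM lam hlam A B C hAm hB hC
    rwa [hB0, ENNReal.zero_rpow_of_pos hp, mul_zero, add_zero]
  rw [← Mp_eq hp lam hA0 hB0]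
  exact hBM lam hlam A B C hA hB hAm hBm hCm hA0 hB0 hC

end
end

section
/- Let μ be the measure on ℝ given by dμ(x)=φ(x)dx, where φ:ℝ→[0,∞) is continuous. If μ((1−λ)A+λB) ≥ (1−λ)μ(A)+λμ(B) holds for every λ∈(0,1) and all measurable sets A,B⊆ℝ containing the origin such that (1−λ)A+λB is also measurable, then φ is positively decreasing. -/
open MeasureTheory Set Metric Filter
open scoped ENNReal NNReal Topology Pointwise

noncomputable section

theorem aux_comb (lam p q r s : ℝ) (hl : lam ∈ Ioo (0:ℝ) 1) (hpq : p ≤ q) (hrs : r ≤ s) :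
    (1 - lam) • Icc p q + lam • Icc r s
      = Icc ((1 - lam) * p + lam * r) ((1 - lam) * q + lam * s) := by
  obtain ⟨h0, h1⟩ := hl
  have h1' : 0 < 1 - lam := by linarith
  rw [LinearOrderedField.smul_Icc h1', LinearOrderedField.smul_Icc h0]
  have hA := mul_le_mul_of_nonneg_left hpq h1'.le
  have hB := mul_le_mul_of_nonneg_left hrs h0.le
  apply Subset.antisymm (Icc_add_Icc_subset _ _ _ _)
  intro z hz
  obtain ⟨hz1, hz2⟩ := hz
  refine Set.mem_add.2 ⟨max ((1 - lam) * p) (z - lam * s), ⟨le_max_left _ _, ?_⟩,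
    z - max ((1 - lam) * p) (z - lam * s), ⟨?_, ?_⟩, by ring⟩
  · exact max_le hA (by linarith)
  · have := max_le (a := (1 - lam) * p) (b := z - lam * s) (c := z - lam * r)
      (by linarith) (by linarith)
    linarith
  · have := le_max_right ((1 - lam) * p) (z - lam * s)
    linarith

theorem aux_antitone (ψ : ℝ → ℝ) (hc : Continuous ψ)
    (h : ∀ lam : ℝ, lam ∈ Ioo (0:ℝ) 1 → ∀ a b : ℝ, 0 ≤ a → 0 ≤ b →
      (1 - lam) * (∫ x in (0:ℝ)..a, ψ x) + lam * (∫ x in (0:ℝ)..b, ψ x)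
        ≤ ∫ x in (0:ℝ)..((1 - lam) * a + lam * b), ψ x) :
    ∀ s t : ℝ, 0 ≤ s → s ≤ t → ψ t ≤ ψ s := by
  have hd : ∀ x, HasDerivAt (fun t => ∫ x in (0:ℝ)..t, ψ x) (ψ x) x := fun x =>
    hc.integral_hasStrictDerivAt 0 x |>.hasDerivAt
  have hcon : ConcaveOn ℝ (Ici (0:ℝ)) (fun t => ∫ x in (0:ℝ)..t, ψ x) := by
    rw [concaveOn_iff_forall_pos]
    refine ⟨convex_Ici 0, ?_⟩
    intro x hx y hy a b ha hb hab
    obtain rfl : a = 1 - b := by linarith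
    exact h b ⟨hb, by linarith⟩ x y hx hy
  intro s t hs hst
  have := hcon.antitoneOn_deriv (fun x _ => (hd x).differentiableAt) (mem_Ici.2 hs)
    (mem_Ici.2 (hs.trans hst)) hst
  rwa [(hd s).deriv, (hd t).deriv] at this

theorem aux_measure (φ : ℝ → ℝ) (hφ0 : ∀ x, 0 ≤ φ x) (hφc : Continuous φ) (p q : ℝ)
    (hpq : p ≤ q) :
    ((volume : Measure ℝ).withDensity fun x => ENNReal.ofReal (φ x)) (Icc p q)
      = ENNReal.ofReal (∫ x in p..q, φ x) := by
  rw [withDensity_apply _ measurableSet_Icc, intervalIntegral.integral_of_le hpq,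
    ← integral_Icc_eq_integral_Ioc,
    ofReal_integral_eq_lintegral_ofReal hφc.continuousOn.integrableOn_Icc
      (Eventually.of_forall hφ0)]

/-- Proposition `p:linBMimplies_quasi`: if the linear Brunn–Minkowski
inequality holds for all measurable subsets of `ℝ` containing the origin, for the measure
with continuous density `φ`, then `φ` is positively decreasing. -/
theorem statement7 (φ : ℝ → ℝ) (hφ0 : ∀ x, 0 ≤ φ x) (hφc : Continuous φ)
    (μ : Measure ℝ) (hμ : μ = (volume : Measure ℝ).withDensity fun x => ENNReal.ofReal (φ x))
    (H : ∀ lam : ℝ, lam ∈ Ioo (0:ℝ) 1 → ∀ A B : Set ℝ, (0:ℝ) ∈ A → (0:ℝ) ∈ B →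
      MeasurableSet A → MeasurableSet B → MeasurableSet ((1 - lam) • A + lam • B) →
      ENNReal.ofReal (1 - lam) * μ A + ENNReal.ofReal lam * μ B
        ≤ μ ((1 - lam) • A + lam • B)) :
    PositivelyDecreasing φ := by
  subst hμ
  have key : ∀ lam : ℝ, lam ∈ Ioo (0:ℝ) 1 → ∀ p q r s : ℝ, p ≤ 0 → 0 ≤ q → r ≤ 0 → 0 ≤ s →
      (1 - lam) * (∫ x in p..q, φ x) + lam * (∫ x in r..s, φ x)
        ≤ ∫ x in ((1 - lam) * p + lam * r)..((1 - lam) * q + lam * s), φ x := by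
    intro lam hl p q r s hp hq hr hs
    have hl0 := hl.1
    have hl1 : 0 < 1 - lam := by linarith [hl.2]
    have hpq := hp.trans hq
    have hrs := hr.trans hs
    have hle : (1 - lam) * p + lam * r ≤ (1 - lam) * q + lam * s := by gcongr
    have h := H lam hl (Icc p q) (Icc r s) ⟨hp, hq⟩ ⟨hr, hs⟩ measurableSet_Icc
      measurableSet_Icc
    rw [aux_comb lam p q r s hl hpq hrs] at h
    have h := h measurableSet_Icc
    have n1 := intervalIntegral.integral_nonneg (μ := volume) hpq (fun x _ => hφ0 x)
    have n2 := intervalIntegral.integral_nonneg (μ := volume) hrs (fun x _ => hφ0 x)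
    have n3 := intervalIntegral.integral_nonneg (μ := volume) hle (fun x _ => hφ0 x)
    rw [aux_measure φ hφ0 hφc _ _ hpq, aux_measure φ hφ0 hφc _ _ hrs,
      aux_measure φ hφ0 hφc _ _ hle, ← ENNReal.ofReal_mul hl1.le, ← ENNReal.ofReal_mul hl0.le,
      ← ENNReal.ofReal_add (by positivity) (by positivity), ENNReal.ofReal_le_ofReal_iff n3] at h
    exact h
  constructor
  · apply aux_antitone φ hφc
    intro lam hl a b ha hb
    simpa using key lam hl 0 a 0 b le_rfl ha le_rfl hb
  · apply aux_antitone (fun x => φ (-x)) (hφc.comp continuous_neg)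
    intro lam hl a b ha hb
    have := key lam hl (-a) 0 (-b) 0 (by linarith) le_rfl (by linarith) le_rfl
    simp only [intervalIntegral.integral_comp_neg, neg_zero]
    convert this using 2 <;> ring

end
end
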